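/- Let n ≥ 2, 0 < α < n, 1 < s ≤ ∞ and 0 < β ≤ 1, and suppose Ω satisfies the L^{s;β}-Dini condition D_{s;β}. Then there is a constant C > 0 such that for every ball B = B(x₀, r), every integer j ≥ 2, and all x, y ∈ B, (∫_{2^{j+1}B ∖ 2^{j}B} | Ω(x−z)/|x−z|^{n−α} − Ω(y−z)/|y−z|^{n−α} |^s dz)^{1/s} ≤ C (2^{j}r)^{n/s − (n−α)} [ 2^{−(j−1)} + 2^{−jβ} ∫_{|x−x₀|/(2^{j+1}r)}^{|x−x₀|/(2^{j}r)} ω_s(δ)/δ^{1+β} dδ + 2^{−jβ} ∫_{|y−x₀|/(2^{j+1}r)}^{|y−x₀|/(2^{j}r)} ω_s(δ)/δ^{1+β} dδ ] (for s = ∞ the left-hand side is the essential supremum over 2^{j+1}B ∖ 2^{j}B and n/s = 0). -/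

import Mathlib

noncomputable section

open MeasureTheory Metric Set
open scoped ENNReal

abbrev En (n : ℕ) : Type := EuclideanSpace ℝ (Fin n)

/-- `Ω` is homogeneous of degree zero. -/
def HomZero {n : ℕ} (Ω : En n → ℝ) : Prop :=
  ∀ t : ℝ, 0 < t → ∀ x : En n, x ≠ 0 → Ω (t • x) = Ω x

/-- Surface measure on the unit sphere `S^{n-1}`. -/
noncomputable def sphereMeasure (n : ℕ) : Measure (sphere (0 : En n) 1) :=
  (volume : Measure (En n)).toSphere

/-- The `L^s(S^{n-1})` norm of `Ω` (essential supremum when `s = ∞`). -/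
noncomputable def sphereLpNorm {n : ℕ} (s : ℝ≥0∞) (Ω : En n → ℝ) : ℝ≥0∞ :=
  eLpNorm (fun x : sphere (0 : En n) 1 => Ω (x : En n)) s (sphereMeasure n)

/-- `‖ρ - I‖ = sup_{x' ∈ S^{n-1}} |ρ x' - x'|`. -/
noncomputable def rotNorm {n : ℕ} (ρ : En n ≃ₗᵢ[ℝ] En n) : ℝ :=
  ⨆ x : sphere (0 : En n) 1, ‖ρ (x : En n) - (x : En n)‖

/-- `ρ ∈ SO(n)`: a linear isometry with determinant one. -/
def IsRotation {n : ℕ} (ρ : En n ≃ₗᵢ[ℝ] En n) : Prop :=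
  LinearMap.det (ρ.toLinearEquiv : En n →ₗ[ℝ] En n) = 1

/-- The integral modulus of continuity `ω_s(δ)` of `Ω` of order `s`
(essential-sup version when `s = ∞`). -/
noncomputable def modCont {n : ℕ} (s : ℝ≥0∞) (Ω : En n → ℝ) (δ : ℝ) : ℝ :=
  (⨆ ρ : {ρ : En n ≃ₗᵢ[ℝ] En n // IsRotation ρ ∧ rotNorm ρ < δ},
    eLpNorm (fun x : sphere (0 : En n) 1 => Ω (ρ.1 (x : En n)) - Ω (x : En n)) s
      (sphereMeasure n)).toReal

/-- The `L^{s;β}`-Dini smoothness condition `D_{s;β}`. -/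
def DiniCond {n : ℕ} (s : ℝ≥0∞) (β : ℝ) (Ω : En n → ℝ) : Prop :=
  HomZero Ω ∧ sphereLpNorm s Ω ≠ ⊤ ∧
    IntegrableOn (fun δ : ℝ => modCont s Ω δ / δ ^ (1 + β)) (Ioo (0 : ℝ) 1)

/-- The homogeneous fractional integral operator `T_{Ω,α}`. -/
noncomputable def T {n : ℕ} (Ω : En n → ℝ) (α : ℝ) (f : En n → ℝ) (x : En n) : ℝ :=
  ∫ y, Ω (x - y) * ‖x - y‖ ^ (α - (n : ℝ)) * f y

/-- Conjugate exponent of `s ∈ (1,∞]`, with `∞' = 1`. -/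
noncomputable def conj (s : ℝ≥0∞) : ℝ := if s = ⊤ then 1 else s.toReal / (s.toReal - 1)

/-- Conjugate exponent of a real exponent `t`. -/
noncomputable def rconj (t : ℝ) : ℝ := t / (t - 1)

/-- A weight: a locally integrable a.e. positive function. -/
def IsWeight {n : ℕ} (ω : En n → ℝ) : Prop :=
  LocallyIntegrable ω volume ∧ ∀ᵐ x : En n, 0 < ω x

/-- The Muckenhoupt–Wheeden class `A(t, ∞)`. -/
def MemArInfty {n : ℕ} (ω : En n → ℝ) (t : ℝ) : Prop :=
  ∃ C > 0, ∀ (x₀ : En n) (r : ℝ), 0 < r →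
    essSup ω (volume.restrict (ball x₀ r)) *
      (⨍ x in ball x₀ r, ω x ^ (-(rconj t))) ^ (1 / rconj t) ≤ C

/-- The Muckenhoupt–Wheeden class `A(u, t)` (with the `ess sup` convention when `u = 1`). -/
def MemArt {n : ℕ} (ω : En n → ℝ) (u t : ℝ) : Prop :=
  ∃ C > 0, ∀ (x₀ : En n) (r : ℝ), 0 < r →
    (⨍ x in ball x₀ r, ω x ^ t) ^ (1 / t) *
      (if u = 1 then essSup (fun x => (ω x)⁻¹) (volume.restrict (ball x₀ r))
       else (⨍ x in ball x₀ r, ω x ^ (-(rconj u))) ^ (1 / rconj u)) ≤ C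

/-- The weighted Lebesgue norm `‖f‖_{L^p(ω^p)}`. -/
noncomputable def wLpNorm {n : ℕ} (p : ℝ) (ω f : En n → ℝ) : ℝ :=
  (∫ x, |f x| ^ p * ω x ^ p) ^ (1 / p)

/-- `f ∈ L^p(ω^p)`. -/
def MemWLp {n : ℕ} (p : ℝ) (ω f : En n → ℝ) : Prop :=
  Measurable f ∧ Integrable (fun x => |f x| ^ p * ω x ^ p)

/-- The set of ball quantities defining the weighted Morrey norm `M^{p,κ}(ω₁, ν)`. -/
def morreySet {n : ℕ} (p κ : ℝ) (ω₁ ν f : En n → ℝ) : Set ℝ :=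
  {c | ∃ (x₀ : En n) (r : ℝ), 0 < r ∧
    c = ((∫ x in ball x₀ r, ν x) ^ (-κ) * ∫ x in ball x₀ r, |f x| ^ p * ω₁ x) ^ (1 / p)}

/-- The weighted Morrey norm `‖f‖_{M^{p,κ}(ω₁, ν)}`. -/
noncomputable def morreyNorm {n : ℕ} (p κ : ℝ) (ω₁ ν f : En n → ℝ) : ℝ :=
  sSup (morreySet p κ ω₁ ν f)

/-- `f ∈ M^{p,κ}(ω₁, ν)`, i.e. `‖f‖_{M^{p,κ}(ω₁,ν)} < ∞`. -/
def MemMorrey {n : ℕ} (p κ : ℝ) (ω₁ ν f : En n → ℝ) : Prop :=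
  Measurable f ∧
  (∀ (x₀ : En n) (r : ℝ), 0 < r → IntegrableOn (fun x => |f x| ^ p * ω₁ x) (ball x₀ r)) ∧
  BddAbove (morreySet p κ ω₁ ν f)

/-!
Dilating by `R = 2 ^ j * r` and inserting the center `x₀`, one has to compare the kernel at `w + v`
and at `w` on the annulus `1 ≤ ‖w‖ ≤ 2`, where `v = (x - x₀) / R` is small. The factor
`‖w‖ ^ (α - n)` is Lipschitz there, so the point is to bound `Ω (w + v) - Ω w` by the rotational
modulus of continuity of `Ω`.

The reflection across the line `ℝ ∙ e` followed by the one across `ℝ ∙ x` is a rotation within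
`8 * ‖x - e‖` of the identity. For fixed `p` and `x` running through a small ball about `e`, the
image of `p` runs, up to positive scaling, through a neighbourhood of `p`, by a map with controlled
Lipschitz constant. As `Ω` is homogeneous of degree zero, the average of `φ |Ω q - Ω p|` over `p` in
an annulus and `q` near `p` is thus at most a supremum over rotations `ρ` of the integral of
`φ |Ω (ρ p) - Ω p|`. Averaging over a point `q` near both `w` and `w + u` replaces rotations by the
translation `u`. Keeping an arbitrary monotone `φ` handles every exponent `s ≤ ∞` at once. Finally
the monotonicity of `ω_s` on `[a, 2 * a]` bounds `ω_s a` by the Dini integral over that interval.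
-/

open scoped RealInnerProductSpace

section Reflection

variable {E : Type*} [NormedAddCommGroup E] [InnerProductSpace ℝ E]

lemma reflection_singleton_eq_normalize (a w : E) :
    (ℝ ∙ a).reflection w =
      (2 * ⟪NormedSpace.normalize a, w⟫) • NormedSpace.normalize a - w := by
  rw [Submodule.reflection_singleton_apply, NormedSpace.normalize, real_inner_smul_left, smul_smul,
    two_smul, ← add_smul]
  congr 2
  simp only [RCLike.ofReal_real_eq_id, id_eq]
  ring

lemma norm_normalize_sub_le {e : E} (he : ‖e‖ = 1) (a : E) :
    ‖NormedSpace.normalize a - e‖ ≤ 2 * ‖a - e‖ := by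
  rcases eq_or_ne a 0 with rfl | ha
  · simp [he]
  have hradial : ‖NormedSpace.normalize a - a‖ ≤ ‖a - e‖ := by
    nth_rw 2 [← NormedSpace.norm_smul_normalize a]
    rw [← one_smul ℝ (NormedSpace.normalize a), smul_smul, mul_one, ← sub_smul, norm_smul,
      NormedSpace.norm_normalize ha, mul_one, ← he, norm_sub_rev a e]
    exact abs_norm_sub_norm_le e a
  linarith [norm_sub_le_norm_sub_add_norm_sub (NormedSpace.normalize a) a e]

lemma norm_reflection_sub_reflection_le {e : E} (he : ‖e‖ = 1) (a w : E) :
    ‖(ℝ ∙ a).reflection w - (ℝ ∙ e).reflection w‖ ≤ 8 * ‖a - e‖ * ‖w‖ := by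
  have hnorm : ‖NormedSpace.normalize a‖ ≤ 1 := by
    rcases eq_or_ne a 0 with rfl | ha
    · simp
    · exact (NormedSpace.norm_normalize ha).le
  have hsub := norm_normalize_sub_le he a
  rw [reflection_singleton_eq_normalize, reflection_singleton_eq_normalize,
    NormedSpace.normalize_eq_self_of_norm_eq_one he]
  set b := NormedSpace.normalize a
  calc ‖(2 * ⟪b, w⟫) • b - w - ((2 * ⟪e, w⟫) • e - w)‖
      = ‖(2 * ⟪b, w⟫) • (b - e) + (2 * ⟪b - e, w⟫) • e‖ := by
        rw [inner_sub_left]; congr 1; module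
    _ ≤ 2 * |⟪b, w⟫| * ‖b - e‖ + 2 * |⟪b - e, w⟫| := by
        refine (norm_add_le _ _).trans_eq ?_
        simp [norm_smul, he]
    _ ≤ 2 * (1 * ‖w‖) * ‖b - e‖ + 2 * (‖b - e‖ * ‖w‖) := by
        gcongr
        · exact (abs_real_inner_le_norm b w).trans (by gcongr)
        · exact abs_real_inner_le_norm (b - e) w
    _ ≤ 8 * ‖a - e‖ * ‖w‖ := by nlinarith [norm_nonneg w]

lemma measurable_reflection_singleton [MeasurableSpace E] [BorelSpace E]
    [SecondCountableTopology E] :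
    Measurable fun x : E × E => (ℝ ∙ x.1).reflection x.2 := by
  simp_rw [reflection_singleton_eq_normalize, NormedSpace.normalize]
  fun_prop

/-- The vector `p + ‖p‖ • e`, which for a unit vector `e` bisects the angle between `e` and `p`:
the reflection across its line maps `‖p‖ • e` to `p`. -/
def bisector (e p : E) : E := p + ‖p‖ • e

/-- The inverse of `bisector e` on the half space `0 < ⟪b, e⟫`. -/
def unbisector (e b : E) : E := b - (‖b‖ ^ 2 / (2 * ⟪b, e⟫)) • e

lemma unbisector_bisector {e p : E} (he : ‖e‖ = 1) (hp : 0 < ⟪bisector e p, e⟫) :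
    unbisector e (bisector e p) = p := by
  have hinner : ⟪bisector e p, e⟫ = ⟪p, e⟫ + ‖p‖ := by
    simp [bisector, inner_add_left, real_inner_smul_left, he]
  have hnorm : ‖bisector e p‖ ^ 2 = ‖p‖ * (2 * (⟪p, e⟫ + ‖p‖)) := by
    rw [bisector, norm_add_sq_real, real_inner_smul_right, norm_smul, he, norm_norm]
    ring
  rw [hinner] at hp
  rw [unbisector, hinner, hnorm, mul_div_cancel_right₀ _ (by positivity), bisector,
    add_sub_cancel_right]

lemma unbisector_smul (e b : E) (t : ℝ) : unbisector e (t • b) = t • unbisector e b := by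
  rcases eq_or_ne t 0 with rfl | ht
  · simp [unbisector]
  rw [unbisector, unbisector, norm_smul, real_inner_smul_left, smul_sub, smul_smul, mul_pow,
    Real.norm_eq_abs, sq_abs]
  congr 2
  field_simp

lemma reflection_eq_smul_unbisector {e b : E} (hb : ⟪b, e⟫ ≠ 0) :
    (ℝ ∙ b).reflection e = (2 * ⟪b, e⟫ / ‖b‖ ^ 2) • unbisector e b := by
  have hb0 : ‖b‖ ≠ 0 := by
    rintro h
    simp [norm_eq_zero.1 h] at hb
  rw [Submodule.reflection_singleton_apply, unbisector, smul_sub, smul_smul,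
    div_mul_div_cancel₀' (mul_ne_zero two_ne_zero hb), div_self (pow_ne_zero 2 hb0), one_smul,
    two_smul, ← add_smul]
  congr 2
  simp only [RCLike.ofReal_real_eq_id, id_eq]
  ring

lemma unbisector_ne_zero {e b : E} (hb : ⟪b, e⟫ ≠ 0) : unbisector e b ≠ 0 := by
  intro h
  have hrefl := reflection_eq_smul_unbisector hb
  rw [h, smul_zero, LinearIsometryEquiv.map_eq_zero_iff] at hrefl
  simp [hrefl] at hb

lemma norm_bisector_sub_le {e : E} (he : ‖e‖ = 1) (p q : E) :
    ‖bisector e p - bisector e q‖ ≤ 2 * ‖p - q‖ := by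
  calc ‖bisector e p - bisector e q‖ = ‖(p - q) + (‖p‖ - ‖q‖) • e‖ := by
        congr 1; simp only [bisector]; module
    _ ≤ ‖p - q‖ + |‖p‖ - ‖q‖| := by
        simpa [norm_smul, he] using norm_add_le (p - q) ((‖p‖ - ‖q‖) • e)
    _ ≤ 2 * ‖p - q‖ := by linarith [abs_norm_sub_norm_le p q]

lemma norm_unbisector_sub_le {e a b : E} {c R : ℝ} (he : ‖e‖ = 1) (hc : 0 < c)
    (ha : c ≤ ⟪a, e⟫) (hb : c ≤ ⟪b, e⟫) (haR : ‖a‖ ≤ R) (hbR : ‖b‖ ≤ R) :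
    ‖unbisector e a - unbisector e b‖ ≤ (1 + 3 / 2 * (R / c) ^ 2) * ‖a - b‖ := by
  have hinner : |⟪b, e⟫ - ⟪a, e⟫| ≤ ‖a - b‖ := by
    simpa [← inner_sub_left, he, norm_sub_rev b a] using abs_real_inner_le_norm (b - a) e
  have hbe : ⟪b, e⟫ ≤ ‖b‖ := by simpa [he] using real_inner_le_norm b e
  have hcR : c ≤ R := hb.trans (hbe.trans hbR)
  set α := ⟪a, e⟫ with hα
  set β := ⟪b, e⟫ with hβ
  have hα0 : 0 < α := hc.trans_le ha
  have hβ0 : 0 < β := hc.trans_le hb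
  have hR0 : 0 ≤ R := (norm_nonneg a).trans haR
  have hquot : |‖a‖ ^ 2 / (2 * α) - ‖b‖ ^ 2 / (2 * β)| ≤ 3 / 2 * (R / c) ^ 2 * ‖a - b‖ := by
    calc |‖a‖ ^ 2 / (2 * α) - ‖b‖ ^ 2 / (2 * β)|
        = |(‖a‖ - ‖b‖) * (‖a‖ + ‖b‖) / (2 * α) + ‖b‖ ^ 2 * (β - α) / (2 * (α * β))| := by
          congr 1; field_simp; ring
      _ ≤ |‖a‖ - ‖b‖| * (‖a‖ + ‖b‖) / (2 * α) + ‖b‖ ^ 2 * |β - α| / (2 * (α * β)) := by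
          refine (abs_add_le _ _).trans_eq ?_
          simp only [abs_div, abs_mul, abs_pow, abs_norm, Nat.abs_ofNat, abs_of_pos hα0,
            abs_of_pos hβ0, abs_of_nonneg (add_nonneg (norm_nonneg a) (norm_nonneg b))]
      _ ≤ ‖a - b‖ * (R + R) / (2 * c) + R ^ 2 * ‖a - b‖ / (2 * (c * c)) := by
          gcongr
          exact abs_norm_sub_norm_le a b
      _ = (R / c + 1 / 2 * (R / c) ^ 2) * ‖a - b‖ := by field_simp; ring
      _ ≤ 3 / 2 * (R / c) ^ 2 * ‖a - b‖ := by
          have : 1 ≤ R / c := (one_le_div hc).2 hcR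
          gcongr
          nlinarith
  calc ‖unbisector e a - unbisector e b‖
      = ‖(a - b) - (‖a‖ ^ 2 / (2 * α) - ‖b‖ ^ 2 / (2 * β)) • e‖ := by
        congr 1; simp only [unbisector, ← hα, ← hβ]; module
    _ ≤ ‖a - b‖ + |‖a‖ ^ 2 / (2 * α) - ‖b‖ ^ 2 / (2 * β)| := by
        refine (norm_sub_le _ _).trans_eq ?_
        rw [norm_smul, he, mul_one, Real.norm_eq_abs]
    _ ≤ (1 + 3 / 2 * (R / c) ^ 2) * ‖a - b‖ := by linarith

end Reflection

section LipschitzChangeOfVariables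

variable {E : Type*} [NormedAddCommGroup E] [NormedSpace ℝ E] [FiniteDimensional ℝ E]
  [MeasurableSpace E] [BorelSpace E] (μ : Measure E) [μ.IsAddHaarMeasure]
  {K : NNReal} {f : E → E} {s t : Set E}

lemma addHaar_image_le_of_lipschitzOnWith (hf : LipschitzOnWith K f s) :
    μ (f '' s) ≤ (K : ℝ≥0∞) ^ Module.finrank ℝ E * μ s := by
  rw [Measure.isAddLeftInvariant_eq_smul μ (Measure.hausdorffMeasure (Module.finrank ℝ E)),
    Measure.smul_apply, Measure.smul_apply, mul_smul_comm]
  gcongr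
  simpa using hf.hausdorffMeasure_image_le (Nat.cast_nonneg (Module.finrank ℝ E))

lemma setLIntegral_le_of_lipschitzOnWith (hfm : Measurable f) (hf : LipschitzOnWith K f t)
    (hst : s ⊆ f '' t) {g : E → ℝ≥0∞} (hg : Measurable g) :
    ∫⁻ y in s, g y ∂μ ≤ (K : ℝ≥0∞) ^ Module.finrank ℝ E * ∫⁻ x in t, g (f x) ∂μ := by
  have hle : μ.restrict s ≤
      (K : ℝ≥0∞) ^ Module.finrank ℝ E • (μ.restrict t).map f := by
    refine Measure.le_iff.2 fun A hA => ?_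
    rw [Measure.smul_apply, Measure.map_apply hfm hA, Measure.restrict_apply hA,
      Measure.restrict_apply (hfm hA), smul_eq_mul]
    refine (measure_mono ?_).trans
      (addHaar_image_le_of_lipschitzOnWith μ (hf.mono (inter_subset_right (s := f ⁻¹' A))))
    rintro y ⟨hyA, hys⟩
    obtain ⟨x, hx, rfl⟩ := hst hys
    exact ⟨x, ⟨hyA, hx⟩, rfl⟩
  calc ∫⁻ y in s, g y ∂μ
      ≤ ∫⁻ y, g y ∂((K : ℝ≥0∞) ^ Module.finrank ℝ E • (μ.restrict t).map f) :=
        lintegral_mono' hle le_rfl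
    _ = (K : ℝ≥0∞) ^ Module.finrank ℝ E * ∫⁻ x in t, g (f x) ∂μ := by
        rw [lintegral_smul_measure, lintegral_map hg hfm, smul_eq_mul]

end LipschitzChangeOfVariables

section ReflectionParametrization

variable {E : Type*} [NormedAddCommGroup E] [InnerProductSpace ℝ E] {e p : E} {δ : ℝ}

lemma inner_normalize_reflection (e p : E) :
    ⟪e, NormedSpace.normalize ((ℝ ∙ e).reflection p)⟫ = ‖p‖⁻¹ * ⟪e, p⟫ := by
  have hfix : (ℝ ∙ e).reflection e = e :=
    Submodule.reflection_mem_subspace_eq_self (Submodule.mem_span_singleton_self e)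
  rw [NormedSpace.normalize, real_inner_smul_right, LinearIsometryEquiv.norm_map]
  nth_rw 1 [← hfix]
  rw [LinearIsometryEquiv.inner_map_map]

lemma bisector_normalize_reflection (he : ‖e‖ = 1) (p : E) :
    bisector (NormedSpace.normalize ((ℝ ∙ e).reflection p)) p = (2 * ⟪e, p⟫) • e := by
  rw [bisector, ← LinearIsometryEquiv.norm_map (ℝ ∙ e).reflection p,
    NormedSpace.norm_smul_normalize, reflection_singleton_eq_normalize,
    NormedSpace.normalize_eq_self_of_norm_eq_one he, add_sub_cancel]

lemma norm_normalize_reflection (e : E) (hp : p ≠ 0) :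
    ‖NormedSpace.normalize ((ℝ ∙ e).reflection p)‖ = 1 :=
  NormedSpace.norm_normalize (by simpa using hp)

lemma quarter_le_inner_normalize_reflection {x : E} (hp : p ≠ 0) (hpe : ‖p‖ / 2 ≤ ⟪e, p⟫)
    (hδ : δ ≤ 1 / 8) (hx : x ∈ ball e (2 * δ)) :
    1 / 4 ≤ ⟪x, NormedSpace.normalize ((ℝ ∙ e).reflection p)⟫ := by
  have hu := norm_normalize_reflection e hp
  have heu : 1 / 2 ≤ ⟪e, NormedSpace.normalize ((ℝ ∙ e).reflection p)⟫ := by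
    rw [inner_normalize_reflection, inv_mul_eq_div, le_div_iff₀ (norm_pos_iff.2 hp)]
    linarith
  have hxe : |⟪x, NormedSpace.normalize ((ℝ ∙ e).reflection p)⟫ -
      ⟪e, NormedSpace.normalize ((ℝ ∙ e).reflection p)⟫| ≤ ‖x - e‖ := by
    simpa [← inner_sub_left, hu] using
      abs_real_inner_le_norm (x - e) (NormedSpace.normalize ((ℝ ∙ e).reflection p))
  rw [mem_ball_iff_norm] at hx
  linarith [neg_le_of_abs_le hxe]

lemma ball_subset_image_unbisector (he : ‖e‖ = 1) (hp : p ≠ 0) (hpe : ‖p‖ / 2 ≤ ⟪e, p⟫)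
    (hδ : δ ≤ 1 / 8) :
    ball p (δ * ‖p‖) ⊆ (fun x => (2 * ⟪e, p⟫) •
      unbisector (NormedSpace.normalize ((ℝ ∙ e).reflection p)) x) '' ball e (2 * δ) := by
  intro q hq
  have hp0 := norm_pos_iff.2 hp
  have hu := norm_normalize_reflection e hp
  have hbis := bisector_normalize_reflection he p
  have hquarter := fun x => quarter_le_inner_normalize_reflection (x := x) hp hpe hδ
  set u := NormedSpace.normalize ((ℝ ∙ e).reflection p)
  have ht : 0 < 2 * ⟪e, p⟫ := by linarith
  set t := 2 * ⟪e, p⟫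
  have hx : t⁻¹ • bisector u q ∈ ball e (2 * δ) := by
    rw [mem_ball_iff_norm] at hq ⊢
    calc ‖t⁻¹ • bisector u q - e‖ = t⁻¹ * ‖bisector u q - bisector u p‖ := by
          rw [hbis, ← norm_smul_of_nonneg (inv_pos.2 ht).le, smul_sub, inv_smul_smul₀ ht.ne']
      _ ≤ t⁻¹ * (2 * ‖q - p‖) := by gcongr; exact norm_bisector_sub_le hu q p
      _ < t⁻¹ * (2 * (δ * ‖p‖)) := by gcongr
      _ = t⁻¹ * ‖p‖ * (2 * δ) := by ring
      _ ≤ 1 * (2 * δ) := by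
        have hδ0 : 0 ≤ δ := (pos_of_mul_pos_left ((norm_nonneg _).trans_lt hq) hp0.le).le
        gcongr
        rw [inv_mul_le_one₀ ht]
        linarith
      _ = 2 * δ := one_mul _
  have hpos : 0 < ⟪bisector u q, u⟫ := by
    have := hquarter _ hx
    rw [real_inner_smul_left] at this
    exact pos_of_mul_pos_right (by linarith) (inv_pos.2 ht).le
  refine ⟨t⁻¹ • bisector u q, hx, ?_⟩
  simp only
  rw [unbisector_smul, smul_inv_smul₀ ht.ne', unbisector_bisector hu hpos]

lemma lipschitzOnWith_unbisector_ball (he : ‖e‖ = 1) (hp : p ≠ 0) (hpe : ‖p‖ / 2 ≤ ⟪e, p⟫)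
    (hδ : δ ≤ 1 / 8) :
    LipschitzOnWith (194 * ‖p‖₊) (fun x => (2 * ⟪e, p⟫) •
      unbisector (NormedSpace.normalize ((ℝ ∙ e).reflection p)) x) (ball e (2 * δ)) := by
  have hnorm : ∀ x ∈ ball e (2 * δ), ‖x‖ ≤ 2 := fun x hx => by
    rw [mem_ball_iff_norm] at hx
    linarith [norm_le_norm_add_norm_sub e x, norm_sub_rev e x]
  have hep : ⟪e, p⟫ ≤ ‖p‖ := by simpa [he] using real_inner_le_norm e p
  refine LipschitzOnWith.of_dist_le_mul fun x hx y hy => ?_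
  have hlip := norm_unbisector_sub_le (norm_normalize_reflection e hp) (by norm_num)
    (quarter_le_inner_normalize_reflection hp hpe hδ hx)
    (quarter_le_inner_normalize_reflection hp hpe hδ hy) (hnorm x hx) (hnorm y hy)
  norm_num at hlip
  rw [dist_eq_norm, dist_eq_norm, ← smul_sub,
    norm_smul_of_nonneg (by linarith [norm_nonneg p])]
  calc 2 * ⟪e, p⟫ * _ ≤ 2 * ‖p‖ * (97 * ‖x - y‖) := by gcongr
    _ = (194 * ‖p‖₊ : NNReal) * ‖x - y‖ := by push_cast; ring

lemma exists_pos_reflection_reflection_eq_smul_unbisector {x : E} (hp : p ≠ 0)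
    (hx : 0 < ⟪x, NormedSpace.normalize ((ℝ ∙ e).reflection p)⟫) :
    ∃ t : ℝ, 0 < t ∧ (ℝ ∙ x).reflection ((ℝ ∙ e).reflection p) =
      t • unbisector (NormedSpace.normalize ((ℝ ∙ e).reflection p)) x := by
  set u := NormedSpace.normalize ((ℝ ∙ e).reflection p) with hu
  have hx0 : x ≠ 0 := by
    rintro rfl
    simp at hx
  have := norm_pos_iff.2 hp
  have := norm_pos_iff.2 hx0
  refine ⟨‖p‖ * (2 * ⟪x, u⟫ / ‖x‖ ^ 2), by positivity, ?_⟩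
  rw [mul_smul, ← reflection_eq_smul_unbisector hx.ne', ← map_smul,
    ← LinearIsometryEquiv.norm_map (ℝ ∙ e).reflection p, hu, NormedSpace.norm_smul_normalize]

variable [FiniteDimensional ℝ E] [MeasurableSpace E] [BorelSpace E] (μ : Measure E)
  [μ.IsAddHaarMeasure]

lemma setLIntegral_ball_le_setLIntegral_reflection (he : ‖e‖ = 1) (hp : p ≠ 0)
    (hpe : ‖p‖ / 2 ≤ ⟪e, p⟫) (hδ : δ ≤ 1 / 8) {G : E → ℝ≥0∞} (hG : Measurable G)
    (hhom : ∀ t : ℝ, 0 < t → ∀ x, x ≠ 0 → G (t • x) = G x) :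
    ∫⁻ q in ball p (δ * ‖p‖), G q ∂μ ≤ (194 * ‖p‖ₑ) ^ Module.finrank ℝ E *
      ∫⁻ x in ball e (2 * δ), G ((ℝ ∙ x).reflection ((ℝ ∙ e).reflection p)) ∂μ := by
  refine (setLIntegral_le_of_lipschitzOnWith μ ?_
    (lipschitzOnWith_unbisector_ball he hp hpe hδ)
    (ball_subset_image_unbisector he hp hpe hδ) hG).trans_eq ?_
  · unfold unbisector
    fun_prop
  push_cast
  congr 1
  refine setLIntegral_congr_fun measurableSet_ball fun x hx => ?_
  have hxu : 0 < ⟪x, NormedSpace.normalize ((ℝ ∙ e).reflection p)⟫ := by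
    linarith [quarter_le_inner_normalize_reflection hp hpe hδ hx]
  have hep : 0 < ⟪e, p⟫ := by linarith [norm_pos_iff.2 hp]
  obtain ⟨t, ht, hrefl⟩ := exists_pos_reflection_reflection_eq_smul_unbisector hp hxu
  have hunb := unbisector_ne_zero hxu.ne'
  rw [hrefl, hhom t ht _ hunb, hhom _ (by linarith) _ hunb]

end ReflectionParametrization

section ReflectionAveraging

variable {E : Type*} [NormedAddCommGroup E] [InnerProductSpace ℝ E]

lemma half_norm_le_inner_of_norm_normalize_sub_lt {e p : E} (he : ‖e‖ = 1) (hp : p ≠ 0)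
    (h : ‖NormedSpace.normalize p - e‖ < 1) : ‖p‖ / 2 ≤ ⟪e, p⟫ := by
  have hsq := norm_sub_sq_real (NormedSpace.normalize p) e
  rw [he, NormedSpace.norm_normalize hp] at hsq
  have hhalf : 1 / 2 ≤ ⟪e, NormedSpace.normalize p⟫ := by
    rw [real_inner_comm]
    nlinarith [norm_nonneg (NormedSpace.normalize p - e)]
  calc ‖p‖ / 2 = ‖p‖ * (1 / 2) := by ring
    _ ≤ ‖p‖ * ⟪e, NormedSpace.normalize p⟫ := by gcongr
    _ = ⟪e, p⟫ := by rw [← real_inner_smul_right, NormedSpace.norm_smul_normalize]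

variable [FiniteDimensional ℝ E]

lemma exists_finite_cover_cone :
    ∃ t : Set E, t.Finite ∧ t ⊆ sphere 0 1 ∧ ∀ p : E, p ≠ 0 → ∃ e ∈ t, ‖p‖ / 2 ≤ ⟪e, p⟫ := by
  obtain ⟨t, ht, htfin, hcover⟩ := (isCompact_sphere (0 : E) 1).finite_cover_balls one_pos
  refine ⟨t, htfin, ht, fun p hp => ?_⟩
  have hmem : NormedSpace.normalize p ∈ sphere (0 : E) 1 := by
    simpa using NormedSpace.norm_normalize hp
  obtain ⟨e, he, hpe⟩ := mem_iUnion₂.1 (hcover hmem)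
  exact ⟨e, he, half_norm_le_inner_of_norm_normalize_sub_lt (by simpa using ht he) hp
    (by simpa [dist_eq_norm] using hpe)⟩

variable [MeasurableSpace E] [BorelSpace E] (μ : Measure E) [μ.IsAddHaarMeasure] {a b δ : ℝ}
  {S : ℝ≥0∞} {F : E → E → ℝ≥0∞}

lemma setLIntegral_cone_le {e : E} (he : ‖e‖ = 1) (ha : 0 < a) (hδ0 : 0 ≤ δ) (hδ : δ ≤ 1 / 8)
    (hFm : Measurable (Function.uncurry F))
    (hhom : ∀ p, ∀ t : ℝ, 0 < t → ∀ q, q ≠ 0 → F p (t • q) = F p q)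
    (hS : ∀ x ∈ ball e (2 * δ),
      ∫⁻ p in closedBall 0 b, F p ((ℝ ∙ x).reflection ((ℝ ∙ e).reflection p)) ∂μ ≤ S) :
    ∫⁻ p in {p | ‖p‖ ∈ Icc a b ∧ ‖p‖ / 2 ≤ ⟪e, p⟫}, ∫⁻ q in ball p (δ * a), F p q ∂μ ∂μ ≤
      ENNReal.ofReal (194 * b) ^ Module.finrank ℝ E * (μ (ball 0 (2 * δ)) * S) := by
  have hcone : MeasurableSet {p : E | ‖p‖ ∈ Icc a b ∧ ‖p‖ / 2 ≤ ⟪e, p⟫} :=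
    (measurable_norm measurableSet_Icc).inter
      (measurableSet_le (measurable_norm.div_const 2) (measurable_const.inner measurable_id))
  have hcomp : Measurable fun z : E × E =>
      F z.1 ((ℝ ∙ z.2).reflection ((ℝ ∙ e).reflection z.1)) :=
    hFm.comp (measurable_fst.prodMk (measurable_reflection_singleton.comp
      (measurable_snd.prodMk ((ℝ ∙ e).reflection.continuous.measurable.comp measurable_fst))))
  calc ∫⁻ p in {p | ‖p‖ ∈ Icc a b ∧ ‖p‖ / 2 ≤ ⟪e, p⟫}, ∫⁻ q in ball p (δ * a), F p q ∂μ ∂μ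
      ≤ ∫⁻ p in {p | ‖p‖ ∈ Icc a b ∧ ‖p‖ / 2 ≤ ⟪e, p⟫},
          ENNReal.ofReal (194 * b) ^ Module.finrank ℝ E *
          ∫⁻ x in ball e (2 * δ), F p ((ℝ ∙ x).reflection ((ℝ ∙ e).reflection p)) ∂μ ∂μ := by
        refine setLIntegral_mono' hcone fun p ⟨⟨hap, hpb⟩, hpe⟩ => ?_
        have hp : p ≠ 0 := norm_pos_iff.1 (ha.trans_le hap)
        refine (lintegral_mono_set (ball_subset_ball (by gcongr))).trans
          ((setLIntegral_ball_le_setLIntegral_reflection μ he hp hpe hδ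
            hFm.of_uncurry_left (hhom p)).trans ?_)
        gcongr
        rw [ENNReal.ofReal_mul (by norm_num), ENNReal.ofReal_ofNat]
        gcongr
        exact (ofReal_norm p).symm.trans_le (ENNReal.ofReal_le_ofReal hpb)
    _ = ENNReal.ofReal (194 * b) ^ Module.finrank ℝ E * ∫⁻ x in ball e (2 * δ),
          ∫⁻ p in {p | ‖p‖ ∈ Icc a b ∧ ‖p‖ / 2 ≤ ⟪e, p⟫},
            F p ((ℝ ∙ x).reflection ((ℝ ∙ e).reflection p)) ∂μ ∂μ := by
        rw [lintegral_const_mul' _ _ (by finiteness), lintegral_lintegral_swap hcomp.aemeasurable]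
    _ ≤ ENNReal.ofReal (194 * b) ^ Module.finrank ℝ E * ∫⁻ _ in ball e (2 * δ), S ∂μ := by
        gcongr 1
        refine setLIntegral_mono' measurableSet_ball fun x hx =>
          (lintegral_mono_set fun p hp => ?_).trans (hS x hx)
        simpa using hp.1.2
    _ = ENNReal.ofReal (194 * b) ^ Module.finrank ℝ E * (μ (ball 0 (2 * δ)) * S) := by
        rw [setLIntegral_const, Measure.addHaar_ball_center, mul_comm S]

variable (a b) in
lemma exists_setLIntegral_annulus_setLIntegral_ball_le (ha : 0 < a) :
    ∃ C : ℝ≥0∞, C ≠ ⊤ ∧ ∀ (δ : ℝ) (S : ℝ≥0∞) (F : E → E → ℝ≥0∞), 0 ≤ δ → δ ≤ 1 / 8 →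
      Measurable (Function.uncurry F) →
      (∀ p, ∀ t : ℝ, 0 < t → ∀ q, q ≠ 0 → F p (t • q) = F p q) →
      (∀ e x : E, ‖e‖ = 1 → ‖x - e‖ < 2 * δ →
        ∫⁻ p in closedBall 0 b, F p ((ℝ ∙ x).reflection ((ℝ ∙ e).reflection p)) ∂μ ≤ S) →
      ∫⁻ p in norm ⁻¹' Icc a b, ∫⁻ q in ball p (δ * a), F p q ∂μ ∂μ ≤
        C * (μ (ball 0 (2 * δ)) * S) := by
  obtain ⟨t, htfin, ht, hcover⟩ := exists_finite_cover_cone (E := E)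
  have := htfin.to_subtype
  have := Fintype.ofFinite t
  refine ⟨Fintype.card t * ENNReal.ofReal (194 * b) ^ Module.finrank ℝ E, by finiteness,
    fun δ S F hδ0 hδ hFm hhom hS => ?_⟩
  calc ∫⁻ p in norm ⁻¹' Icc a b, ∫⁻ q in ball p (δ * a), F p q ∂μ ∂μ
      ≤ ∫⁻ p in ⋃ e : t, {p | ‖p‖ ∈ Icc a b ∧ ‖p‖ / 2 ≤ ⟪(e : E), p⟫},
          ∫⁻ q in ball p (δ * a), F p q ∂μ ∂μ := by
        refine lintegral_mono_set fun p hp => ?_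
        obtain ⟨e, he, hpe⟩ := hcover p (norm_pos_iff.1 (ha.trans_le hp.1))
        exact mem_iUnion.2 ⟨⟨e, he⟩, hp, hpe⟩
    _ ≤ ∑' e : t, ∫⁻ p in {p | ‖p‖ ∈ Icc a b ∧ ‖p‖ / 2 ≤ ⟪(e : E), p⟫},
          ∫⁻ q in ball p (δ * a), F p q ∂μ ∂μ := lintegral_iUnion_le _ _
    _ ≤ ∑' _ : t, ENNReal.ofReal (194 * b) ^ Module.finrank ℝ E * (μ (ball 0 (2 * δ)) * S) := by
        refine ENNReal.tsum_le_tsum fun e => ?_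
        have he : ‖(e : E)‖ = 1 := by simpa using ht e.2
        exact setLIntegral_cone_le μ he ha hδ0 hδ hFm hhom fun x hx =>
          hS e x he (by simpa [dist_eq_norm] using hx)
    _ = _ := by simp [mul_assoc]

end ReflectionAveraging

section Averaging

lemma measure_ball_mul_comp_enorm_sub_le {X : Type*} [PseudoMetricSpace X] [MeasurableSpace X]
    (μ : Measure X) {φ : ℝ≥0∞ → ℝ≥0∞} (hφ : Monotone φ) {f : X → ℝ} (hf : Measurable f)
    {x y : X} {r : ℝ} (hxy : dist x y ≤ r) :
    μ (ball x r) * φ ‖f x - f y‖ₑ ≤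
      ∫⁻ q in ball x (2 * r), φ (2 * ‖f q - f x‖ₑ) ∂μ +
        ∫⁻ q in ball y (2 * r), φ (2 * ‖f q - f y‖ₑ) ∂μ := by
  have hφm : Measurable φ := hφ.measurable
  have hr : 0 ≤ r := dist_nonneg.trans hxy
  have hpoint : ∀ q, φ ‖f x - f y‖ₑ ≤ φ (2 * ‖f q - f x‖ₑ) + φ (2 * ‖f q - f y‖ₑ) := by
    intro q
    have htri : ‖f x - f y‖ₑ ≤ ‖f q - f x‖ₑ + ‖f q - f y‖ₑ := by
      rw [← enorm_neg (f q - f x), neg_sub, ← sub_add_sub_cancel (f x) (f q) (f y)]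
      exact enorm_add_le _ _
    rcases le_total ‖f q - f x‖ₑ ‖f q - f y‖ₑ with h | h
    · refine (hφ (htri.trans ?_)).trans le_add_self
      rw [two_mul]
      gcongr
    · refine (hφ (htri.trans ?_)).trans le_self_add
      rw [two_mul]
      gcongr
  calc μ (ball x r) * φ ‖f x - f y‖ₑ = ∫⁻ _ in ball x r, φ ‖f x - f y‖ₑ ∂μ := by
        rw [setLIntegral_const, mul_comm]
    _ ≤ ∫⁻ q in ball x r, φ (2 * ‖f q - f x‖ₑ) + φ (2 * ‖f q - f y‖ₑ) ∂μ :=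
        lintegral_mono hpoint
    _ = ∫⁻ q in ball x r, φ (2 * ‖f q - f x‖ₑ) ∂μ +
          ∫⁻ q in ball x r, φ (2 * ‖f q - f y‖ₑ) ∂μ := lintegral_add_left (by fun_prop) _
    _ ≤ _ := add_le_add (lintegral_mono_set (ball_subset_ball (by linarith)))
        (lintegral_mono_set (ball_subset_ball' (by linarith)))

lemma measurable_setLIntegral_ball {X : Type*} [PseudoMetricSpace X]
    [SecondCountableTopology X] [MeasurableSpace X] [OpensMeasurableSpace X] (μ : Measure X)
    [SFinite μ] {F : X → X → ℝ≥0∞} (hF : Measurable (Function.uncurry F)) (r : ℝ) :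
    Measurable fun p => ∫⁻ q in ball p r, F p q ∂μ := by
  have hball : MeasurableSet {z : X × X | dist z.2 z.1 < r} :=
    measurableSet_lt (measurable_snd.dist measurable_fst) measurable_const
  simp_rw [← lintegral_indicator measurableSet_ball]
  exact (hF.indicator hball).lintegral_prod_right'

end Averaging

section Rotation

variable {n : ℕ}

lemma isRotation_reflection_trans {a b : En n} (ha : a ≠ 0) (hb : b ≠ 0) :
    IsRotation ((ℝ ∙ a).reflection.trans (ℝ ∙ b).reflection) := by
  have hdet : ∀ c : En n, c ≠ 0 →
      LinearMap.det ((ℝ ∙ c).reflection.toLinearEquiv : En n →ₗ[ℝ] En n) = (-1) ^ (n - 1) := by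
    intro c hc
    have hfinrank := (ℝ ∙ c).finrank_add_finrank_orthogonal
    rw [finrank_span_singleton hc, finrank_euclideanSpace_fin] at hfinrank
    exact Nat.eq_sub_of_add_eq' hfinrank ▸ (ℝ ∙ c).det_reflection
  have hcomp : (((ℝ ∙ a).reflection.trans (ℝ ∙ b).reflection).toLinearEquiv : En n →ₗ[ℝ] En n) =
      ((ℝ ∙ b).reflection.toLinearEquiv : En n →ₗ[ℝ] En n) ∘ₗ
        ((ℝ ∙ a).reflection.toLinearEquiv : En n →ₗ[ℝ] En n) := rfl
  rw [IsRotation, hcomp, LinearMap.det_comp, hdet a ha, hdet b hb, ← mul_pow]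
  simp

lemma rotNorm_reflection_trans_le {e : En n} (he : ‖e‖ = 1) (x : En n) :
    rotNorm ((ℝ ∙ e).reflection.trans (ℝ ∙ x).reflection) ≤ 8 * ‖x - e‖ := by
  refine Real.iSup_le (fun w => ?_) (by positivity)
  have hw : ‖(w : En n)‖ = 1 := by simp
  have h := norm_reflection_sub_reflection_le he x ((ℝ ∙ e).reflection (w : En n))
  rwa [Submodule.reflection_reflection, LinearIsometryEquiv.norm_map, hw, mul_one] at h

end Rotation

section AveragedTranslation

lemma setLIntegral_comp_add_right_le {G : Type*} [AddGroup G] [MeasurableSpace G]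
    [MeasurableAdd G] (μ : Measure G) [μ.IsAddRightInvariant] (g : G → ℝ≥0∞) {u : G}
    {s t : Set G} (hst : s ⊆ (· + u) ⁻¹' t) :
    ∫⁻ w in s, g (w + u) ∂μ ≤ ∫⁻ w in t, g w ∂μ :=
  (lintegral_mono_set hst).trans_eq <|
    (measurePreserving_add_right μ u).setLIntegral_comp_preimage_emb
      (measurableEmbedding_addRight u) g t

lemma annulus_subset_preimage_add_right {E : Type*} [SeminormedAddCommGroup E] {a b : ℝ} (u : E) :
    norm ⁻¹' Icc a b ⊆ (· + u) ⁻¹' (norm ⁻¹' Icc (a - ‖u‖) (b + ‖u‖)) := by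
  rintro w ⟨haw, hwb⟩
  refine ⟨?_, ?_⟩
  · linarith [norm_le_add_norm_add w u]
  · linarith [norm_add_le w u]

variable (n : ℕ)

lemma exists_setLIntegral_annulus_setLIntegral_ball_sub_le :
    ∃ C : ℝ≥0∞, C ≠ ⊤ ∧ ∀ (Ω : En n → ℝ) (r : ℝ) (φ : ℝ≥0∞ → ℝ≥0∞) (S : ℝ≥0∞),
      Measurable Ω → HomZero Ω → 0 ≤ r → r ≤ 1 / 32 → Measurable φ →
      (∀ ρ : En n ≃ₗᵢ[ℝ] En n, IsRotation ρ → rotNorm ρ < 64 * r →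
        ∫⁻ w in ball 0 4, φ ‖Ω (ρ w) - Ω w‖ₑ ≤ S) →
      ∫⁻ p in norm ⁻¹' Icc (1 / 2) 3, ∫⁻ q in ball p (2 * r), φ ‖Ω q - Ω p‖ₑ ≤
        C * (volume (ball (0 : En n) r) * S) := by
  obtain ⟨C, hC, hmain⟩ := exists_setLIntegral_annulus_setLIntegral_ball_le
    (volume : Measure (En n)) (1 / 2) 3 (by norm_num)
  refine ⟨C * 8 ^ n, by finiteness, fun Ω r φ S hΩ hhom hr hr' hφ hS => ?_⟩
  have hFm : Measurable fun z : En n × En n => φ ‖Ω z.2 - Ω z.1‖ₑ :=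
    hφ.comp (by fun_prop)
  have hFS : ∀ e x : En n, ‖e‖ = 1 → ‖x - e‖ < 2 * (4 * r) →
      ∫⁻ p in closedBall 0 3,
        φ ‖Ω ((ℝ ∙ x).reflection ((ℝ ∙ e).reflection p)) - Ω p‖ₑ ≤ S := by
    intro e x he hx
    have hx0 : x ≠ 0 := by
      rintro rfl
      rw [zero_sub, norm_neg, he] at hx
      linarith
    have he0 : e ≠ 0 := by
      rintro rfl
      simp at he
    exact (lintegral_mono_set (closedBall_subset_ball (by norm_num))).trans
      (hS _ (isRotation_reflection_trans he0 hx0)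
        ((rotNorm_reflection_trans_le he x).trans_lt (by linarith)))
  have havg := hmain (4 * r) S (fun p q => φ ‖Ω q - Ω p‖ₑ) (by positivity) (by linarith) hFm
    (fun p t ht q hq => by simp only [hhom t ht q hq]) hFS
  have hvol : volume (ball (0 : En n) (8 * r)) = 8 ^ n * volume (ball (0 : En n) r) := by
    rw [Measure.addHaar_ball_mul_of_pos _ _ (by norm_num), finrank_euclideanSpace_fin]
    simp
  rwa [show 4 * r * (1 / 2) = 2 * r by ring, show 2 * (4 * r) = 8 * r by ring, hvol,
    mul_assoc (8 ^ n), ← mul_assoc C] at havg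

lemma exists_setLIntegral_annulus_translate_sub_le :
    ∃ C : ℝ≥0∞, C ≠ ⊤ ∧ ∀ (Ω : En n → ℝ) (u : En n) (φ : ℝ≥0∞ → ℝ≥0∞) (S : ℝ≥0∞),
      Measurable Ω → HomZero Ω → u ≠ 0 → ‖u‖ ≤ 1 / 32 → Monotone φ →
      (∀ ρ : En n ≃ₗᵢ[ℝ] En n, IsRotation ρ → rotNorm ρ < 64 * ‖u‖ →
        ∫⁻ w in ball 0 4, φ (2 * ‖Ω (ρ w) - Ω w‖ₑ) ≤ S) →
      ∫⁻ w in norm ⁻¹' Icc (3 / 4) (9 / 4), φ ‖Ω (w + u) - Ω w‖ₑ ≤ C * S := by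
  obtain ⟨C, hC, hmain⟩ := exists_setLIntegral_annulus_setLIntegral_ball_sub_le n
  refine ⟨2 * C, by finiteness, fun Ω u φ S hΩ hhom hu hu' hφ hS => ?_⟩
  have hφm : Measurable fun t => φ (2 * t) := hφ.measurable.comp (by fun_prop)
  let A : Set (En n) := norm ⁻¹' Icc (3 / 4) (9 / 4)
  let A' : Set (En n) := norm ⁻¹' Icc (1 / 2) 3
  let J : En n → ℝ≥0∞ := fun p => ∫⁻ q in ball p (2 * ‖u‖), φ (2 * ‖Ω q - Ω p‖ₑ)
  have hJ : ∫⁻ p in A', J p ≤ C * (volume (ball (0 : En n) ‖u‖) * S) :=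
    hmain Ω ‖u‖ (fun t => φ (2 * t)) S hΩ hhom (norm_nonneg u) hu' hφm hS
  have hJm : Measurable J := measurable_setLIntegral_ball volume
    (F := fun p q => φ (2 * ‖Ω q - Ω p‖ₑ)) (hφ.measurable.comp (by fun_prop)) _
  have hAA' : A ⊆ A' := preimage_mono (Icc_subset_Icc (by norm_num) (by norm_num))
  have htranslate : ∫⁻ w in A, J (w + u) ≤ ∫⁻ p in A', J p :=
    setLIntegral_comp_add_right_le volume J ((annulus_subset_preimage_add_right u).trans
      (preimage_mono (preimage_mono (Icc_subset_Icc (by linarith) (by linarith)))))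
  have hball : volume (ball (0 : En n) ‖u‖) ≠ 0 := (measure_ball_pos _ _ (norm_pos_iff.2 hu)).ne'
  refine (ENNReal.mul_le_mul_iff_right hball measure_ball_lt_top.ne).1 ?_
  calc volume (ball (0 : En n) ‖u‖) * ∫⁻ w in A, φ ‖Ω (w + u) - Ω w‖ₑ
      = ∫⁻ w in A, volume (ball w ‖u‖) * φ ‖Ω w - Ω (w + u)‖ₑ := by
        simp_rw [enorm_sub_rev (Ω (_ + u)), Measure.addHaar_ball_center volume _ ‖u‖]
        rw [lintegral_const_mul' _ _ measure_ball_lt_top.ne]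
    _ ≤ ∫⁻ w in A, (J w + J (w + u)) := by
        refine lintegral_mono fun w => measure_ball_mul_comp_enorm_sub_le volume hφ hΩ ?_
        simp
    _ = (∫⁻ w in A, J w) + ∫⁻ w in A, J (w + u) := lintegral_add_left hJm _
    _ ≤ C * (volume (ball (0 : En n) ‖u‖) * S) + C * (volume (ball (0 : En n) ‖u‖) * S) :=
        add_le_add ((lintegral_mono_set hAA').trans hJ) (htranslate.trans hJ)
    _ = volume (ball (0 : En n) ‖u‖) * (2 * C * S) := by ring

end AveragedTranslation

section MonotoneComparison

variable {α β ι F : Type*} [MeasurableSpace α] [MeasurableSpace β] [NormedAddCommGroup F]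
  {μ : Measure α} {ν : Measure β} {f : α → F} {g : ι → β → F} {C K M s : ℝ≥0∞}

lemma eLpNormEssSup_le_of_monotone_lintegral_le (hf : AEStronglyMeasurable f μ)
    (h : ∀ φ : ℝ≥0∞ → ℝ≥0∞, Monotone φ → ∀ S : ℝ≥0∞,
      (∀ i, ∫⁻ y, φ (K * ‖g i y‖ₑ) ∂ν ≤ S) → ∫⁻ x, φ ‖f x‖ₑ ∂μ ≤ C * S)
    (hg : ∀ i, eLpNormEssSup (g i) ν ≤ M) : eLpNormEssSup f μ ≤ K * M := by
  let φ : ℝ≥0∞ → ℝ≥0∞ := (Ioi (K * M)).indicator 1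
  have hφ : Monotone φ := fun a b hab => by
    by_cases ha : a ∈ Ioi (K * M)
    · have hb : b ∈ Ioi (K * M) := lt_of_lt_of_le ha hab
      simp only [φ, indicator_of_mem ha, indicator_of_mem hb, Pi.one_apply, le_refl]
    · simp only [φ, indicator_of_notMem ha, zero_le]
  have hφ0 : ∀ t, φ t = 0 ↔ t ≤ K * M := by simp [φ]
  have hgφ : ∀ i, ∫⁻ y, φ (K * ‖g i y‖ₑ) ∂ν ≤ 0 := fun i => by
    refine (lintegral_eq_zero_of_ae_eq_zero ?_).le
    filter_upwards [ae_le_eLpNormEssSup (f := g i) (μ := ν)] with y hy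
    exact (hφ0 _).2 (mul_le_mul_right (hy.trans (hg i)) K)
  have hfφ : ∫⁻ x, φ ‖f x‖ₑ ∂μ = 0 := by simpa using h φ hφ 0 hgφ
  have hfφ_ae := (lintegral_eq_zero_iff' (hφ.measurable.comp_aemeasurable hf.enorm)).1 hfφ
  exact eLpNormEssSup_le_of_ae_enorm_bound (hfφ_ae.mono fun x hx => (hφ0 _).1 hx)

lemma eLpNorm_le_of_monotone_lintegral_le (hs : s ≠ 0) (hK : K ≠ ⊤) (hf : AEStronglyMeasurable f μ)
    (h : ∀ φ : ℝ≥0∞ → ℝ≥0∞, Monotone φ → ∀ S : ℝ≥0∞,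
      (∀ i, ∫⁻ y, φ (K * ‖g i y‖ₑ) ∂ν ≤ S) → ∫⁻ x, φ ‖f x‖ₑ ∂μ ≤ C * S)
    (hg : ∀ i, eLpNorm (g i) s ν ≤ M) : eLpNorm f s μ ≤ C ^ (1 / s).toReal * (K * M) := by
  rcases eq_or_ne s ⊤ with rfl | hs'
  · simpa using eLpNormEssSup_le_of_monotone_lintegral_le hf h (by simpa using hg)
  have hpos : 0 < s.toReal := ENNReal.toReal_pos hs hs'
  have hpow := h (fun t => t ^ s.toReal) (ENNReal.monotone_rpow_of_nonneg hpos.le)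
    ((K * M) ^ s.toReal) fun i => by
      have hgi := hg i
      rw [eLpNorm_eq_lintegral_rpow_enorm_toReal hs hs', one_div,
        ENNReal.rpow_inv_le_iff hpos] at hgi
      simp_rw [ENNReal.mul_rpow_of_nonneg _ _ hpos.le]
      rw [lintegral_const_mul' _ _ (by finiteness)]
      gcongr
  rw [eLpNorm_eq_lintegral_rpow_enorm_toReal hs hs', ENNReal.toReal_div, ENNReal.toReal_one]
  calc (∫⁻ x, ‖f x‖ₑ ^ s.toReal ∂μ) ^ (1 / s.toReal)
      ≤ (C * (K * M) ^ s.toReal) ^ (1 / s.toReal) := by gcongr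
    _ = C ^ (1 / s.toReal) * (K * M) := by
      rw [ENNReal.mul_rpow_of_nonneg _ _ (by positivity), ← ENNReal.rpow_mul,
        mul_one_div_cancel hpos.ne', ENNReal.rpow_one]

end MonotoneComparison

section Splitting

variable {G F : Type*} [AddGroup G] [MeasurableSpace G] [MeasurableAdd G] [NormedAddCommGroup F]
  {μ : Measure G} [μ.IsAddRightInvariant] {f : G → F} {s : ℝ≥0∞} {u : G} {A B : Set G}

lemma eLpNorm_comp_add_right_restrict_le (hAB : A ⊆ (· + u) ⁻¹' B) :
    eLpNorm (fun w => f (w + u)) s (μ.restrict A) ≤ eLpNorm f s (μ.restrict B) := by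
  have hmp := (measurePreserving_add_right μ u).restrict_preimage_emb
    (measurableEmbedding_addRight u) B
  refine (eLpNorm_mono_measure _ (Measure.restrict_mono_set μ hAB)).trans_eq ?_
  rw [← hmp.map_eq, (measurableEmbedding_addRight u).eLpNorm_map_measure]
  rfl

lemma eLpNorm_add_nsmul_sub_restrict_le (hf : StronglyMeasurable f) (hs : 1 ≤ s) (N : ℕ)
    (hAB : ∀ k < N, A ⊆ (· + k • u) ⁻¹' B) :
    eLpNorm (fun w => f (w + N • u) - f w) s (μ.restrict A) ≤
      N * eLpNorm (fun w => f (w + u) - f w) s (μ.restrict B) := by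
  have htelescope : (fun w => f (w + N • u) - f w) =
      ∑ k ∈ Finset.range N, fun w => f (w + k • u + u) - f (w + k • u) := by
    ext w
    simpa [succ_nsmul, add_assoc] using
      (Finset.sum_range_sub (fun k => f (w + k • u)) N).symm
  have hmeas (k : ℕ) : StronglyMeasurable fun w => f (w + k • u + u) - f (w + k • u) :=
    (hf.comp_measurable (by fun_prop)).sub (hf.comp_measurable (by fun_prop))
  calc eLpNorm (fun w => f (w + N • u) - f w) s (μ.restrict A)
      ≤ ∑ k ∈ Finset.range N,
          eLpNorm (fun w => f (w + k • u + u) - f (w + k • u)) s (μ.restrict A) := by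
        rw [htelescope]
        exact eLpNorm_sum_le (fun k _ => (hmeas k).aestronglyMeasurable) hs
    _ ≤ ∑ _k ∈ Finset.range N, eLpNorm (fun w => f (w + u) - f w) s (μ.restrict B) :=
        Finset.sum_le_sum fun k hk => eLpNorm_comp_add_right_restrict_le
          (f := fun w => f (w + u) - f w) (hAB k (Finset.mem_range.1 hk))
    _ = N * eLpNorm (fun w => f (w + u) - f w) s (μ.restrict B) := by simp

end Splitting

section Polar

lemma volumeIoiPow_sub_one_Iio {d : ℕ} (hd : 0 < d) {R : ℝ} (hR : 0 < R) :
    Measure.volumeIoiPow (d - 1) (Iio ⟨R, hR⟩) = ENNReal.ofReal (R ^ d / d) := by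
  rw [Measure.volumeIoiPow_apply_Iio, Nat.sub_add_cancel hd, Nat.cast_sub hd, Nat.cast_one,
    sub_add_cancel]

variable {E F : Type*} [NormedAddCommGroup E] [NormedSpace ℝ E] [FiniteDimensional ℝ E]
  [Nontrivial E] [MeasurableSpace E] [BorelSpace E] [NormedAddCommGroup F]
  (μ : Measure E) [μ.IsAddHaarMeasure] {R : ℝ}

lemma map_fst_homeomorphUnitSphereProd_restrict_ball (hR : 0 < R) :
    ((μ.comap (Subtype.val : ({0}ᶜ : Set E) → E)).restrict (Subtype.val ⁻¹' ball 0 R)).map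
        (fun x => (homeomorphUnitSphereProd E x).1) =
      ENNReal.ofReal (R ^ Module.finrank ℝ E / Module.finrank ℝ E) • μ.toSphere := by
  have hball : (Subtype.val ⁻¹' ball (0 : E) R : Set ({0}ᶜ : Set E)) =
      homeomorphUnitSphereProd E ⁻¹' (univ ×ˢ Iio ⟨R, hR⟩) := by
    ext x
    simp [← Subtype.coe_lt_coe]
  have hmp := μ.measurePreserving_homeomorphUnitSphereProd.restrict_preimage
    (s := univ ×ˢ Iio (⟨R, hR⟩ : Ioi (0 : ℝ))) (MeasurableSet.univ.prod measurableSet_Iio)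
  rw [← hball, ← Measure.prod_restrict, Measure.restrict_univ] at hmp
  rw [show (fun x => (homeomorphUnitSphereProd E x).1) = Prod.fst ∘ homeomorphUnitSphereProd E
      from rfl, ← Measure.map_map measurable_fst (homeomorphUnitSphereProd E).measurable,
    hmp.map_eq, Measure.map_fst_prod, Measure.restrict_apply_univ,
    volumeIoiPow_sub_one_Iio Module.finrank_pos]

lemma eLpNorm_restrict_ball_eq_toSphere (hR : 0 < R) (s : ℝ≥0∞) {g : E → F}
    (hg : StronglyMeasurable g) (hhom : ∀ t : ℝ, 0 < t → ∀ x, x ≠ 0 → g (t • x) = g x) :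
    eLpNorm g s (μ.restrict (ball 0 R)) =
      ENNReal.ofReal (R ^ Module.finrank ℝ E / Module.finrank ℝ E) ^ (1 / s).toReal *
        eLpNorm (fun x : sphere (0 : E) 1 => g x) s μ.toSphere := by
  have hemb : MeasurableEmbedding (Subtype.val : ({0}ᶜ : Set E) → E) :=
    MeasurableEmbedding.subtype_coe (measurableSet_singleton _).compl
  have hrestrict : μ.restrict (ball 0 R) =
      ((μ.comap (Subtype.val : ({0}ᶜ : Set E) → E)).restrict (Subtype.val ⁻¹' ball 0 R)).map
        Subtype.val := by
    rw [← hemb.restrict_map, hemb.map_comap, Subtype.range_coe, restrict_compl_singleton]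
  have hgsphere : g ∘ (Subtype.val : ({0}ᶜ : Set E) → E) =
      (fun x : sphere (0 : E) 1 => g x) ∘ fun x => (homeomorphUnitSphereProd E x).1 := by
    ext x
    simp only [Function.comp_apply, homeomorphUnitSphereProd_apply_fst_coe]
    exact (hhom _ (inv_pos.2 (norm_pos_iff.2 x.2)) _ x.2).symm
  have hc : ENNReal.ofReal (R ^ Module.finrank ℝ E / Module.finrank ℝ E) ≠ 0 := by
    have : 0 < Module.finrank ℝ E := Module.finrank_pos
    rw [Ne, ENNReal.ofReal_eq_zero, not_le]
    positivity
  have hgm : StronglyMeasurable fun x : sphere (0 : E) 1 => g x :=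
    hg.comp_measurable measurable_subtype_coe
  rw [hrestrict, hemb.eLpNorm_map_measure, hgsphere,
    ← eLpNorm_map_measure hgm.aestronglyMeasurable (by fun_prop),
    map_fst_homeomorphUnitSphereProd_restrict_ball μ hR, eLpNorm_smul_measure_of_ne_zero hc,
    smul_eq_mul]

end Polar

section ModulusOfContinuity

variable {n : ℕ} {Ω : En n → ℝ} {s : ℝ≥0∞}

lemma HomZero.comp_linearIsometryEquiv (hhom : HomZero Ω) (ρ : En n ≃ₗᵢ[ℝ] En n) :
    HomZero fun w => Ω (ρ w) := fun t ht x hx => by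
  simpa only [map_smul] using hhom t ht (ρ x) (by simpa using hx)

lemma HomZero.sub {Ω' : En n → ℝ} (hhom : HomZero Ω) (hhom' : HomZero Ω') :
    HomZero fun w => Ω w - Ω' w := fun t ht x hx => by
  simp only [hhom t ht x hx, hhom' t ht x hx]

lemma eLpNorm_restrict_ball_eq_sphereLpNorm [NeZero n] (hΩ : Measurable Ω) (hhom : HomZero Ω)
    (s : ℝ≥0∞) {R : ℝ} (hR : 0 < R) :
    eLpNorm Ω s (volume.restrict (ball 0 R)) =
      ENNReal.ofReal (R ^ n / n) ^ (1 / s).toReal * sphereLpNorm s Ω := by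
  rw [eLpNorm_restrict_ball_eq_toSphere volume hR s hΩ.stronglyMeasurable hhom,
    finrank_euclideanSpace_fin]
  rfl

lemma sphereLpNorm_comp_linearIsometryEquiv [NeZero n] (hΩ : Measurable Ω) (hhom : HomZero Ω)
    (s : ℝ≥0∞) (ρ : En n ≃ₗᵢ[ℝ] En n) : sphereLpNorm s (fun w => Ω (ρ w)) = sphereLpNorm s Ω := by
  have hmp := ρ.measurePreserving.restrict_preimage_emb ρ.toMeasurableEquiv.measurableEmbedding
    (ball (0 : En n) 1)
  rw [ρ.preimage_ball, map_zero] at hmp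
  have hball := eLpNorm_comp_measurePreserving (p := s) hΩ.aestronglyMeasurable hmp
  rw [Function.comp_def, eLpNorm_restrict_ball_eq_sphereLpNorm hΩ hhom s one_pos,
    eLpNorm_restrict_ball_eq_sphereLpNorm (Ω := fun w => Ω (ρ w)) (hΩ.comp ρ.continuous.measurable)
      (hhom.comp_linearIsometryEquiv ρ) s one_pos] at hball
  have : (0 : ℝ) < n := Nat.cast_pos.2 (NeZero.pos n)
  exact (ENNReal.mul_right_inj (by simp [ENNReal.rpow_eq_zero_iff, this]) (by finiteness)).1 hball

/-- The modulus of continuity `ω_s(δ)` as an extended real, so that the supremum over rotations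
makes sense without a boundedness hypothesis; `modCont` is its `toReal`. -/
def eModCont (s : ℝ≥0∞) (Ω : En n → ℝ) (δ : ℝ) : ℝ≥0∞ :=
  ⨆ ρ : {ρ : En n ≃ₗᵢ[ℝ] En n // IsRotation ρ ∧ rotNorm ρ < δ},
    sphereLpNorm s fun x => Ω (ρ.1 x) - Ω x

lemma eModCont_mono (s : ℝ≥0∞) (Ω : En n → ℝ) : Monotone (eModCont s Ω) := fun _ _ hab =>
  iSup_mono' fun ρ => ⟨⟨ρ.1, ρ.2.1, ρ.2.2.trans_le hab⟩, le_rfl⟩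

lemma sphereLpNorm_sub_le_eModCont (s : ℝ≥0∞) (Ω : En n → ℝ) {δ : ℝ} {ρ : En n ≃ₗᵢ[ℝ] En n}
    (hρ : IsRotation ρ) (hρδ : rotNorm ρ < δ) :
    sphereLpNorm s (fun x => Ω (ρ x) - Ω x) ≤ eModCont s Ω δ :=
  le_iSup (fun ρ : {ρ : En n ≃ₗᵢ[ℝ] En n // IsRotation ρ ∧ rotNorm ρ < δ} =>
    sphereLpNorm s fun x => Ω (ρ.1 x) - Ω x) ⟨ρ, hρ, hρδ⟩

lemma eModCont_le_two_mul_sphereLpNorm [NeZero n] (hΩ : Measurable Ω) (hhom : HomZero Ω)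
    (hs : 1 ≤ s) (δ : ℝ) : eModCont s Ω δ ≤ 2 * sphereLpNorm s Ω := by
  refine iSup_le fun ρ => ?_
  have hΩρ : Measurable fun x : sphere (0 : En n) 1 => Ω (ρ.1 x) :=
    (hΩ.comp ρ.1.continuous.measurable).comp measurable_subtype_coe
  calc sphereLpNorm s (fun x => Ω (ρ.1 x) - Ω x)
      ≤ sphereLpNorm s (fun x => Ω (ρ.1 x)) + sphereLpNorm s Ω :=
        eLpNorm_sub_le hΩρ.aestronglyMeasurable
          (hΩ.comp measurable_subtype_coe).aestronglyMeasurable hs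
    _ = 2 * sphereLpNorm s Ω := by
        rw [sphereLpNorm_comp_linearIsometryEquiv hΩ hhom, two_mul]

lemma ofReal_modCont [NeZero n] (hΩ : Measurable Ω) (hhom : HomZero Ω) (hs : 1 ≤ s)
    (hfin : sphereLpNorm s Ω ≠ ⊤) (δ : ℝ) : ENNReal.ofReal (modCont s Ω δ) = eModCont s Ω δ :=
  ENNReal.ofReal_toReal
    (ne_top_of_le_ne_top (by finiteness) (eModCont_le_two_mul_sphereLpNorm hΩ hhom hs δ))

lemma modCont_nonneg (s : ℝ≥0∞) (Ω : En n → ℝ) (δ : ℝ) : 0 ≤ modCont s Ω δ :=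
  ENNReal.toReal_nonneg

lemma modCont_mono [NeZero n] (hΩ : Measurable Ω) (hhom : HomZero Ω) (hs : 1 ≤ s)
    (hfin : sphereLpNorm s Ω ≠ ⊤) : Monotone (modCont s Ω) := fun a b hab => by
  rw [← ENNReal.ofReal_le_ofReal_iff (modCont_nonneg s Ω b), ofReal_modCont hΩ hhom hs hfin,
    ofReal_modCont hΩ hhom hs hfin]
  exact eModCont_mono s Ω hab

end ModulusOfContinuity

lemma le_two_mul_rpow_mul_intervalIntegral_div_rpow {ω : ℝ → ℝ} {β a t : ℝ} (hmono : Monotone ω)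
    (hω : ∀ δ, 0 ≤ ω δ) (hβ : 0 ≤ β) (ha : 0 < a) (hat : 2 * a ≤ t)
    (hint : IntervalIntegrable (fun δ => ω δ / δ ^ (1 + β)) volume a (2 * a)) :
    ω a ≤ 2 * (t ^ β * ∫ δ in a..2 * a, ω δ / δ ^ (1 + β)) := by
  have hlower : a * (ω a / (2 * a) ^ (1 + β)) ≤ ∫ δ in a..2 * a, ω δ / δ ^ (1 + β) :=
    calc a * (ω a / (2 * a) ^ (1 + β))
        = ∫ _δ in a..2 * a, ω a / (2 * a) ^ (1 + β) := by
          rw [intervalIntegral.integral_const, smul_eq_mul]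
          ring
      _ ≤ ∫ δ in a..2 * a, ω δ / δ ^ (1 + β) :=
          intervalIntegral.integral_mono_on (by linarith) intervalIntegrable_const hint
            fun δ hδ => div_le_div₀ (hω δ) (hmono hδ.1) (Real.rpow_pos_of_pos (ha.trans_le hδ.1) _)
              (Real.rpow_le_rpow (ha.le.trans hδ.1) hδ.2 (by linarith))
  calc ω a = 2 * ((2 * a) ^ β * (a * (ω a / (2 * a) ^ (1 + β)))) := by
        rw [Real.rpow_add (by positivity), Real.rpow_one]
        field_simp
    _ ≤ 2 * (t ^ β * ∫ δ in a..2 * a, ω δ / δ ^ (1 + β)) := by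
        have := hω a
        have : 0 ≤ t := by linarith
        gcongr

section Translation

variable {n : ℕ} [NeZero n] {s : ℝ≥0∞}

variable (n) in
lemma exists_eLpNorm_annulus_small_translate_sub_le (hs : s ≠ 0) :
    ∃ C : ℝ≥0∞, C ≠ ⊤ ∧ ∀ (Ω : En n → ℝ) (u : En n), Measurable Ω → HomZero Ω → ‖u‖ ≤ 1 / 32 →
      eLpNorm (fun w => Ω (w + u) - Ω w) s (volume.restrict (norm ⁻¹' Icc (3 / 4) (9 / 4))) ≤
        C * eModCont s Ω (64 * ‖u‖) := by
  obtain ⟨C, hC, hmain⟩ := exists_setLIntegral_annulus_translate_sub_le n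
  let c : ℝ≥0∞ := ENNReal.ofReal (4 ^ n / n) ^ (1 / s).toReal
  refine ⟨C ^ (1 / s).toReal * (2 * c), by finiteness, fun Ω u hΩ hhom hu => ?_⟩
  rcases eq_or_ne u 0 with rfl | hu0
  · simp
  have hrot : ∀ ρ : {ρ : En n ≃ₗᵢ[ℝ] En n // IsRotation ρ ∧ rotNorm ρ < 64 * ‖u‖},
      eLpNorm (fun w => Ω (ρ.1 w) - Ω w) s (volume.restrict (ball 0 4)) ≤
        c * eModCont s Ω (64 * ‖u‖) := fun ρ => by
    rw [eLpNorm_restrict_ball_eq_sphereLpNorm (Ω := fun w => Ω (ρ.1 w) - Ω w)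
      ((hΩ.comp ρ.1.continuous.measurable).sub hΩ)
      ((hhom.comp_linearIsometryEquiv ρ.1).sub hhom) s (by norm_num)]
    gcongr
    exact sphereLpNorm_sub_le_eModCont s Ω ρ.2.1 ρ.2.2
  refine (eLpNorm_le_of_monotone_lintegral_le hs ENNReal.ofNat_ne_top
    ((hΩ.comp (measurable_add_const u)).sub hΩ).aestronglyMeasurable
    (fun φ hφ S hS => hmain Ω u φ S hΩ hhom hu0 hu hφ fun ρ h h' => hS ⟨ρ, h, h'⟩)
    hrot).trans_eq ?_
  ring

variable (n) in
lemma exists_eLpNorm_annulus_translate_sub_le (hs : 1 ≤ s) :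
    ∃ C : ℝ≥0∞, C ≠ ⊤ ∧ ∀ (Ω : En n → ℝ) (v : En n), Measurable Ω → HomZero Ω → ‖v‖ ≤ 1 / 4 →
      eLpNorm (fun w => Ω (w + v) - Ω w) s (volume.restrict (norm ⁻¹' Icc 1 2)) ≤
        C * eModCont s Ω (‖v‖ / 2) := by
  obtain ⟨C, hC, hmain⟩ :=
    exists_eLpNorm_annulus_small_translate_sub_le n (zero_lt_one.trans_le hs).ne'
  refine ⟨(128 : ℕ) * C, by finiteness, fun Ω v hΩ hhom hv => ?_⟩
  -- Splitting `v` into 128 equal steps `u` makes the rotation radius `64 * ‖u‖` equal to `‖v‖ / 2`,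
  -- the left endpoint of the Dini integral.
  let u : En n := (1 / 128 : ℝ) • v
  have hu : ‖u‖ = ‖v‖ / 128 := by
    simp only [u, norm_smul, Real.norm_eq_abs]
    norm_num
    ring
  have hv_eq : v = 128 • u := by
    simp only [u, ← Nat.cast_smul_eq_nsmul ℝ, smul_smul]
    norm_num
  have hsub : ∀ k < 128,
      norm ⁻¹' Icc (1 : ℝ) 2 ⊆ (· + k • u) ⁻¹' (norm ⁻¹' Icc (3 / 4) (9 / 4)) := by
    intro k hk
    have hku : ‖k • u‖ ≤ 1 / 4 := by
      have : (k : ℝ) ≤ 128 := by exact_mod_cast hk.le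
      rw [← Nat.cast_smul_eq_nsmul ℝ, norm_smul, Real.norm_natCast, hu]
      nlinarith [norm_nonneg v]
    exact (annulus_subset_preimage_add_right (k • u)).trans
      (preimage_mono (preimage_mono (Icc_subset_Icc (by linarith) (by linarith))))
  calc eLpNorm (fun w => Ω (w + v) - Ω w) s (volume.restrict (norm ⁻¹' Icc 1 2))
      ≤ (128 : ℕ) * eLpNorm (fun w => Ω (w + u) - Ω w) s
          (volume.restrict (norm ⁻¹' Icc (3 / 4) (9 / 4))) := by
        rw [hv_eq]
        exact eLpNorm_add_nsmul_sub_restrict_le hΩ.stronglyMeasurable hs 128 hsub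
    _ ≤ (128 : ℕ) * (C * eModCont s Ω (64 * ‖u‖)) := by
        gcongr
        exact hmain Ω u hΩ hhom (by linarith)
    _ = (128 : ℕ) * C * eModCont s Ω (‖v‖ / 2) := by
        rw [hu, mul_assoc]
        congr 3
        ring

end Translation

section Kernel

/-- The homogeneous kernel `Ω(w) |w|^p`; the paper's kernel is the case `p = α - n`. -/
def homKernel {n : ℕ} (p : ℝ) (Ω : En n → ℝ) (w : En n) : ℝ := Ω w * ‖w‖ ^ p

lemma exists_enorm_rpow_le_lipschitzOnWith_Icc (p : ℝ) {a : ℝ} (ha : 0 < a) (b : ℝ) :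
    ∃ K : NNReal, (∀ x ∈ Icc a b, ‖x ^ p‖ₑ ≤ K) ∧ LipschitzOnWith K (· ^ p) (Icc a b) := by
  have hdiff : ContDiffOn ℝ 1 (fun x : ℝ => x ^ p) (Icc a b) := fun x hx =>
    (Real.contDiffAt_rpow_const_of_ne (ha.trans_le hx.1).ne').contDiffWithinAt
  obtain ⟨K, hK⟩ := hdiff.exists_lipschitzOnWith one_ne_zero (convex_Icc a b) isCompact_Icc
  obtain ⟨D, hD⟩ := isCompact_Icc.exists_bound_of_continuousOn hdiff.continuousOn
  refine ⟨max K D.toNNReal, fun x hx => ?_, hK.weaken (le_max_left _ _)⟩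
  have hx_le : ‖x ^ p‖₊ ≤ D.toNNReal := by
    simpa only [norm_toNNReal] using Real.toNNReal_le_toNNReal (hD x hx)
  exact ENNReal.coe_le_coe.2 (hx_le.trans (le_max_right _ _))

variable {n : ℕ} {Ω : En n → ℝ} {s : ℝ≥0∞}

lemma measurable_homKernel (p : ℝ) (hΩ : Measurable Ω) : Measurable (homKernel p Ω) := by
  unfold homKernel
  fun_prop

lemma exists_eLpNorm_homKernel_translate_sub_le_add (p : ℝ) (hs : 1 ≤ s) :
    ∃ C : ℝ≥0∞, C ≠ ⊤ ∧ ∀ (Ω : En n → ℝ) (v : En n), Measurable Ω → ‖v‖ ≤ 1 / 4 →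
      eLpNorm (fun w => homKernel p Ω (w + v) - homKernel p Ω w) s
          (volume.restrict (norm ⁻¹' Icc 1 2)) ≤
        C * (eLpNorm (fun w => Ω (w + v) - Ω w) s (volume.restrict (norm ⁻¹' Icc 1 2)) +
          ‖v‖ₑ * eLpNorm Ω s (volume.restrict (norm ⁻¹' Icc 1 2))) := by
  obtain ⟨K, hbound, hlip⟩ :=
    exists_enorm_rpow_le_lipschitzOnWith_Icc p (a := 3 / 4) (by norm_num) (9 / 4)
  refine ⟨K, by finiteness, fun Ω v hΩ hv => ?_⟩
  set μ : Measure (En n) := volume.restrict (norm ⁻¹' Icc 1 2)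
  have hmem : ∀ᵐ w ∂μ, ‖w‖ ∈ Icc (3 / 4 : ℝ) (9 / 4) ∧ ‖w + v‖ ∈ Icc (3 / 4 : ℝ) (9 / 4) := by
    filter_upwards [ae_restrict_mem (measurableSet_Icc.preimage measurable_norm)] with w hw
    have hwv := annulus_subset_preimage_add_right v hw
    exact ⟨⟨by linarith [hw.1], by linarith [hw.2]⟩, ⟨by linarith [hwv.1], by linarith [hwv.2]⟩⟩
  have hΩ_term : eLpNorm (fun w => ‖w + v‖ ^ p * (Ω (w + v) - Ω w)) s μ ≤
      K * eLpNorm (fun w => Ω (w + v) - Ω w) s μ := by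
    refine eLpNorm_le_mul_eLpNorm_of_ae_le_mul' (hmem.mono fun w hw => ?_) s
    rw [enorm_mul]
    gcongr
    exact hbound _ hw.2
  have hnorm_term : eLpNorm (fun w => (‖w + v‖ ^ p - ‖w‖ ^ p) * Ω w) s μ ≤
      (K * ‖v‖ₑ) * eLpNorm Ω s μ := by
    rw [enorm_eq_nnnorm, ← ENNReal.coe_mul]
    refine eLpNorm_le_mul_eLpNorm_of_ae_le_mul' (hmem.mono fun w hw => ?_) s
    rw [enorm_mul, ENNReal.coe_mul, ← enorm_eq_nnnorm, ← edist_eq_enorm_sub]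
    gcongr
    refine (hlip hw.2 hw.1).trans ?_
    gcongr
    simpa [edist_eq_enorm_sub] using lipschitzWith_one_norm (w + v) w
  have hsplit : (fun w => homKernel p Ω (w + v) - homKernel p Ω w) =
      (fun w => ‖w + v‖ ^ p * (Ω (w + v) - Ω w)) + fun w => (‖w + v‖ ^ p - ‖w‖ ^ p) * Ω w := by
    ext w
    simp only [homKernel, Pi.add_apply]
    ring
  rw [hsplit, mul_add, ← mul_assoc]
  refine (eLpNorm_add_le ?_ ?_ hs).trans (add_le_add hΩ_term hnorm_term)
  · fun_prop
  · fun_prop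

lemma exists_eLpNorm_homKernel_translate_sub_le [NeZero n] (p : ℝ) (hΩ : Measurable Ω)
    (hhom : HomZero Ω) (hs : 1 ≤ s) (hfin : sphereLpNorm s Ω ≠ ⊤) :
    ∃ C : ℝ, 0 < C ∧ ∀ v : En n, ‖v‖ ≤ 1 / 4 →
      eLpNorm (fun w => homKernel p Ω (w + v) - homKernel p Ω w) s
          (volume.restrict (norm ⁻¹' Icc 1 2)) ≤
        ENNReal.ofReal (C * (‖v‖ + modCont s Ω (‖v‖ / 2))) := by
  obtain ⟨C, hC, htranslate⟩ := exists_eLpNorm_annulus_translate_sub_le n hs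
  obtain ⟨D, hD, hkernel⟩ := exists_eLpNorm_homKernel_translate_sub_le_add (n := n) p hs
  let N : ℝ≥0∞ := ENNReal.ofReal (3 ^ n / n) ^ (1 / s).toReal * sphereLpNorm s Ω
  have hN : eLpNorm Ω s (volume.restrict (norm ⁻¹' Icc 1 2)) ≤ N := by
    refine (eLpNorm_mono_measure _ (Measure.restrict_mono_set _ fun w hw => ?_)).trans_eq
      (eLpNorm_restrict_ball_eq_sphereLpNorm hΩ hhom s (by norm_num : (0 : ℝ) < 3))
    rw [mem_ball_zero_iff]
    linarith [hw.2]
  have hK : D * (C + N) + 1 ≠ ⊤ := by finiteness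
  refine ⟨(D * (C + N) + 1).toReal, ENNReal.toReal_pos (by positivity) hK, fun v hv => ?_⟩
  rw [ENNReal.ofReal_mul ENNReal.toReal_nonneg, ENNReal.ofReal_toReal hK,
    ENNReal.ofReal_add (norm_nonneg v) (modCont_nonneg s Ω _),
    ofReal_modCont hΩ hhom hs hfin, ofReal_norm]
  calc eLpNorm (fun w => homKernel p Ω (w + v) - homKernel p Ω w) s
        (volume.restrict (norm ⁻¹' Icc 1 2))
      ≤ D * (C * eModCont s Ω (‖v‖ / 2) + ‖v‖ₑ * N) :=
        (hkernel Ω v hΩ hv).trans (by gcongr; exact htranslate Ω v hΩ hhom hv)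
    _ ≤ D * ((C + N) * eModCont s Ω (‖v‖ / 2) + ‖v‖ₑ * (C + N)) := by
        gcongr
        · exact le_self_add
        · exact le_add_self
    _ = D * (C + N) * (‖v‖ₑ + eModCont s Ω (‖v‖ / 2)) := by ring
    _ ≤ (D * (C + N) + 1) * (‖v‖ₑ + eModCont s Ω (‖v‖ / 2)) := by
        gcongr
        exact le_self_add

end Kernel

section Rescaling

variable {E F : Type*} [NormedAddCommGroup E] [NormedSpace ℝ E] [FiniteDimensional ℝ E]
  [MeasurableSpace E] [BorelSpace E] [NormedAddCommGroup F] (μ : Measure E) [μ.IsAddHaarMeasure]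
  {R : ℝ}

lemma map_inv_smul_sub_left_addHaar (hR : 0 < R) (x₀ : E) :
    μ.map (fun z => R⁻¹ • (x₀ - z)) = ENNReal.ofReal (R ^ Module.finrank ℝ E) • μ := by
  rw [show (fun z => R⁻¹ • (x₀ - z)) = (R⁻¹ • ·) ∘ (x₀ - ·) from rfl,
    ← Measure.map_map (by fun_prop) (by fun_prop), (Measure.measurePreserving_sub_left μ x₀).map_eq,
    Measure.map_addHaar_smul μ (inv_ne_zero hR.ne'), inv_pow, inv_inv, abs_of_pos (by positivity)]

lemma eLpNorm_comp_inv_smul_sub_left (hR : 0 < R) (x₀ : E) (s : ℝ≥0∞) (k : E → F) (A : Set E) :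
    eLpNorm (fun z => k (R⁻¹ • (x₀ - z))) s (μ.restrict ((fun z => R⁻¹ • (x₀ - z)) ⁻¹' A)) =
      ENNReal.ofReal (R ^ (Module.finrank ℝ E * s⁻¹.toReal)) * eLpNorm k s (μ.restrict A) := by
  have hemb : MeasurableEmbedding fun z => R⁻¹ • (x₀ - z) :=
    (measurableEmbedding_const_smul₀ (inv_ne_zero hR.ne')).comp
      (MeasurableEquiv.subLeft x₀).measurableEmbedding
  rw [show (fun z => k (R⁻¹ • (x₀ - z))) = k ∘ fun z => R⁻¹ • (x₀ - z) from rfl,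
    ← hemb.eLpNorm_map_measure, ← hemb.restrict_map, map_inv_smul_sub_left_addHaar μ hR,
    Measure.restrict_smul, eLpNorm_smul_measure_of_ne_zero (by simpa using pow_pos hR _),
    smul_eq_mul, one_div, ENNReal.ofReal_rpow_of_pos (by positivity), ← Real.rpow_natCast,
    ← Real.rpow_mul hR.le]

end Rescaling

section TwoPoint

variable {n : ℕ} {Ω : En n → ℝ} {s : ℝ≥0∞}

lemma HomZero.homKernel_smul (hhom : HomZero Ω) (p : ℝ) {R : ℝ} (hR : 0 < R) (w : En n) :
    homKernel p Ω (R • w) = R ^ p * homKernel p Ω w := by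
  rcases eq_or_ne w 0 with rfl | hw
  · rcases eq_or_ne p 0 with rfl | hp
    · simp [homKernel]
    · simp [homKernel, Real.zero_rpow hp]
  · rw [homKernel, homKernel, hhom R hR w hw, norm_smul, Real.norm_of_nonneg hR.le,
      Real.mul_rpow hR.le (norm_nonneg w)]
    ring

lemma eLpNorm_homKernel_sub_center_le (hhom : HomZero Ω) (p : ℝ) (s : ℝ≥0∞) {R : ℝ} (hR : 0 < R)
    (x₀ x : En n) :
    eLpNorm (fun z => homKernel p Ω (x - z) - homKernel p Ω (x₀ - z)) s
        (volume.restrict (ball x₀ (2 * R) \ ball x₀ R)) ≤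
      ENNReal.ofReal (R ^ (n * s⁻¹.toReal + p)) *
        eLpNorm (fun w => homKernel p Ω (w + R⁻¹ • (x - x₀)) - homKernel p Ω w) s
          (volume.restrict (norm ⁻¹' Icc 1 2)) := by
  have hdilate : (fun z => homKernel p Ω (x - z) - homKernel p Ω (x₀ - z)) = R ^ p • fun z =>
      homKernel p Ω (R⁻¹ • (x₀ - z) + R⁻¹ • (x - x₀)) - homKernel p Ω (R⁻¹ • (x₀ - z)) := by
    ext z
    rw [Pi.smul_apply, smul_eq_mul, mul_sub, ← hhom.homKernel_smul p hR,
      ← hhom.homKernel_smul p hR, ← smul_add, smul_inv_smul₀ hR.ne', smul_inv_smul₀ hR.ne']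
    congr 2
    abel
  have hannulus : ball x₀ (2 * R) \ ball x₀ R ⊆
      (fun z => R⁻¹ • (x₀ - z)) ⁻¹' (norm ⁻¹' Icc 1 2) := by
    rintro z ⟨hz, hz'⟩
    rw [mem_ball, dist_comm, dist_eq_norm] at hz hz'
    simp only [mem_preimage, norm_smul, norm_inv, Real.norm_of_nonneg hR.le, mem_Icc]
    rw [le_inv_mul_iff₀ hR, inv_mul_le_iff₀ hR]
    constructor <;> linarith
  rw [hdilate, eLpNorm_const_smul, Real.enorm_eq_ofReal (by positivity), add_comm _ p,
    Real.rpow_add hR, ENNReal.ofReal_mul (by positivity), mul_assoc]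
  gcongr
  refine (eLpNorm_mono_measure _ (Measure.restrict_mono_set _ hannulus)).trans_eq ?_
  rw [eLpNorm_comp_inv_smul_sub_left volume hR x₀ s
    (fun w => homKernel p Ω (w + R⁻¹ • (x - x₀)) - homKernel p Ω w), finrank_euclideanSpace_fin]

lemma DiniCond.modCont_le_intervalIntegral [NeZero n] {β a t : ℝ} (hD : DiniCond s β Ω)
    (hΩ : Measurable Ω) (hs : 1 ≤ s) (hβ : 0 ≤ β) (ha : 0 < a) (hat : 2 * a ≤ t) (ht : t < 1) :
    modCont s Ω a ≤ 2 * (t ^ β * ∫ δ in a..2 * a, modCont s Ω δ / δ ^ (1 + β)) := by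
  refine le_two_mul_rpow_mul_intervalIntegral_div_rpow (modCont_mono hΩ hD.1 hs hD.2.1)
    (modCont_nonneg s Ω) hβ ha hat ?_
  rw [intervalIntegrable_iff_integrableOn_Icc_of_le (by linarith)]
  exact hD.2.2.mono_set fun δ hδ => ⟨ha.trans_le hδ.1, by linarith [hδ.2]⟩

lemma exists_eLpNorm_homKernel_sub_center_le [NeZero n] (p : ℝ) {β : ℝ} (hs : 1 ≤ s) (hβ : 0 ≤ β)
    (hΩ : Measurable Ω) (hD : DiniCond s β Ω) :
    ∃ C : ℝ, 0 < C ∧ ∀ (x₀ x : En n) (R t : ℝ), 0 < R → t ≤ 1 / 4 → ‖x - x₀‖ ≤ t * R →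
      eLpNorm (fun z => homKernel p Ω (x - z) - homKernel p Ω (x₀ - z)) s
          (volume.restrict (ball x₀ (2 * R) \ ball x₀ R)) ≤
        ENNReal.ofReal (C * R ^ (n * s⁻¹.toReal + p) * (t + t ^ β *
          ∫ δ in (‖x - x₀‖ / (2 * R))..(‖x - x₀‖ / R), modCont s Ω δ / δ ^ (1 + β))) := by
  obtain ⟨C, hC, hunit⟩ := exists_eLpNorm_homKernel_translate_sub_le p hΩ hD.1 hs hD.2.1
  refine ⟨2 * C, by positivity, fun x₀ x R t hR ht hxt => ?_⟩
  rcases eq_or_ne x x₀ with rfl | hne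
  · simp
  have hx : 0 < ‖x - x₀‖ := norm_pos_iff.2 (sub_ne_zero.2 hne)
  have hv : ‖R⁻¹ • (x - x₀)‖ = ‖x - x₀‖ / R := by
    rw [norm_smul, norm_inv, Real.norm_of_nonneg hR.le, div_eq_inv_mul]
  have hvt : ‖x - x₀‖ / R ≤ t := (div_le_iff₀ hR).2 hxt
  have hdouble : 2 * (‖x - x₀‖ / (2 * R)) = ‖x - x₀‖ / R := by field_simp
  have hω := hD.modCont_le_intervalIntegral hΩ hs hβ (a := ‖x - x₀‖ / (2 * R)) (t := t)
    (by positivity) (hdouble.trans_le hvt) (by linarith)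
  rw [hdouble] at hω
  refine (eLpNorm_homKernel_sub_center_le hD.1 p s hR x₀ x).trans ?_
  rw [mul_right_comm, mul_comm _ (R ^ _), ENNReal.ofReal_mul (by positivity)]
  gcongr
  refine (hunit _ (by linarith)).trans (ENNReal.ofReal_le_ofReal ?_)
  rw [hv, div_div, mul_comm R 2, mul_comm 2 C, mul_assoc]
  gcongr
  linarith [hx.trans_le hxt, div_nonneg hx.le hR.le]

lemma exists_eLpNorm_homKernel_sub_le [NeZero n] (p : ℝ) {β : ℝ} (hs : 1 ≤ s) (hβ : 0 ≤ β)
    (hΩ : Measurable Ω) (hD : DiniCond s β Ω) :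
    ∃ C : ℝ, 0 < C ∧ ∀ (x₀ x y : En n) (R t : ℝ), 0 < R → t ≤ 1 / 4 →
      ‖x - x₀‖ ≤ t * R → ‖y - x₀‖ ≤ t * R →
      (eLpNorm (fun z => homKernel p Ω (x - z) - homKernel p Ω (y - z)) s
          (volume.restrict (ball x₀ (2 * R) \ ball x₀ R))).toReal ≤
        C * R ^ (n * s⁻¹.toReal + p) * (2 * t +
          t ^ β * (∫ δ in (‖x - x₀‖ / (2 * R))..(‖x - x₀‖ / R), modCont s Ω δ / δ ^ (1 + β)) +
          t ^ β * ∫ δ in (‖y - x₀‖ / (2 * R))..(‖y - x₀‖ / R), modCont s Ω δ / δ ^ (1 + β)) := by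
  obtain ⟨C, hC, hcenter⟩ := exists_eLpNorm_homKernel_sub_center_le p hs hβ hΩ hD
  refine ⟨C, hC, fun x₀ x y R t hR ht hx hy => ?_⟩
  set I : En n → ℝ := fun x =>
    ∫ δ in (‖x - x₀‖ / (2 * R))..(‖x - x₀‖ / R), modCont s Ω δ / δ ^ (1 + β)
  have ht0 : 0 ≤ t := nonneg_of_mul_nonneg_left ((norm_nonneg _).trans hx) hR
  have hI : ∀ x, 0 ≤ I x := fun x => by
    refine intervalIntegral.integral_nonneg (by gcongr; linarith) fun δ hδ =>
      div_nonneg (modCont_nonneg s Ω δ) (Real.rpow_nonneg (le_trans (by positivity) hδ.1) _)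
  have hbound : ∀ x, 0 ≤ C * R ^ (n * s⁻¹.toReal + p) * (t + t ^ β * I x) := fun x => by
    have := hI x
    positivity
  have hmeas : ∀ x, AEStronglyMeasurable (fun z => homKernel p Ω (x - z) - homKernel p Ω (x₀ - z))
      (volume.restrict (ball x₀ (2 * R) \ ball x₀ R)) := fun x =>
    (((measurable_homKernel p hΩ).comp (by fun_prop)).sub
      ((measurable_homKernel p hΩ).comp (by fun_prop))).aestronglyMeasurable
  have htriangle : eLpNorm (fun z => homKernel p Ω (x - z) - homKernel p Ω (y - z)) s
      (volume.restrict (ball x₀ (2 * R) \ ball x₀ R)) ≤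
      ENNReal.ofReal (C * R ^ (n * s⁻¹.toReal + p) * (t + t ^ β * I x) +
        C * R ^ (n * s⁻¹.toReal + p) * (t + t ^ β * I y)) := by
    rw [ENNReal.ofReal_add (hbound x) (hbound y)]
    simpa only [Pi.sub_def, sub_sub_sub_cancel_right] using
      (eLpNorm_sub_le (hmeas x) (hmeas y) hs).trans
        (add_le_add (hcenter x₀ x R t hR ht hx) (hcenter x₀ y R t hR ht hy))
  refine (ENNReal.toReal_le_of_le_ofReal (add_nonneg (hbound x) (hbound y)) htriangle).trans_eq ?_
  ring

end TwoPoint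

theorem kernel_difference_dyadic_two_points_general {n : ℕ} [NeZero n] (α : ℝ)
    {s : ℝ≥0∞} (hs : 1 ≤ s) {β : ℝ} (hβ : 0 ≤ β)
    {Ω : En n → ℝ} (hΩ : Measurable Ω) (hD : DiniCond s β Ω) :
    ∃ C > 0, ∀ (x₀ : En n) (r : ℝ), 0 < r → ∀ j : ℕ, 2 ≤ j →
      ∀ x ∈ ball x₀ r, ∀ y ∈ ball x₀ r,
        (eLpNorm
            (fun z : En n =>
              Ω (x - z) * ‖x - z‖ ^ (α - (n : ℝ)) - Ω (y - z) * ‖y - z‖ ^ (α - (n : ℝ))) s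
            (volume.restrict
              (ball x₀ ((2 : ℝ) ^ (j + 1) * r) \ ball x₀ ((2 : ℝ) ^ j * r)))).toReal
        ≤ C * ((2 : ℝ) ^ j * r) ^ ((n : ℝ) * (s⁻¹).toReal - ((n : ℝ) - α)) *
            (1 / (2 : ℝ) ^ (j - 1) +
              (1 / (2 : ℝ) ^ ((j : ℝ) * β)) *
                (∫ δ in (‖x - x₀‖ / ((2 : ℝ) ^ (j + 1) * r))..(‖x - x₀‖ / ((2 : ℝ) ^ j * r)),
                  modCont s Ω δ / δ ^ (1 + β)) +
              (1 / (2 : ℝ) ^ ((j : ℝ) * β)) *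
                (∫ δ in (‖y - x₀‖ / ((2 : ℝ) ^ (j + 1) * r))..(‖y - x₀‖ / ((2 : ℝ) ^ j * r)),
                  modCont s Ω δ / δ ^ (1 + β))) := by
  obtain ⟨C, hC, hmain⟩ := exists_eLpNorm_homKernel_sub_le (α - n) hs hβ hΩ hD
  refine ⟨C, hC, fun x₀ r hr j hj x hx y hy => ?_⟩
  have hR : (2 : ℝ) ^ (j + 1) * r = 2 * (2 ^ j * r) := by ring
  have ht : 1 / (2 : ℝ) ^ j ≤ 1 / 4 :=
    one_div_le_one_div_of_le (by norm_num) ((by norm_num : (4 : ℝ) = 2 ^ 2).trans_le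
      (pow_le_pow_right₀ one_le_two hj))
  have htj : 1 / (2 : ℝ) ^ (j - 1) = 2 * (1 / 2 ^ j) := by
    rw [← pow_sub_one_mul (by lia : j ≠ 0) (2 : ℝ)]
    field_simp
  have htβ : 1 / (2 : ℝ) ^ ((j : ℝ) * β) = (1 / 2 ^ j) ^ β := by
    rw [Real.div_rpow zero_le_one (by positivity), Real.one_rpow, Real.rpow_mul zero_le_two,
      Real.rpow_natCast]
  have hball : ∀ x ∈ ball x₀ r, ‖x - x₀‖ ≤ 1 / 2 ^ j * (2 ^ j * r) := fun x hx => by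
    rw [← mul_assoc, one_div_mul_cancel (by positivity), one_mul, ← dist_eq_norm]
    exact (mem_ball.1 hx).le
  rw [hR, htj, htβ, sub_eq_add_neg _ ((n : ℝ) - α), neg_sub]
  exact hmain x₀ x y _ _ (by positivity) ht (hball x hx) (hball y hy)

/-- (Kernel smoothness estimate on dyadic annuli, two-point version.) -/
theorem kernel_difference_dyadic_two_points {n : ℕ} (hn : 2 ≤ n)
    (α : ℝ) (hα0 : 0 < α) (hαn : α < n)
    (s : ℝ≥0∞) (hs1 : 1 < s)
    (β : ℝ) (hβ0 : 0 < β) (hβ1 : β ≤ 1)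
    (Ω : En n → ℝ) (hΩm : Measurable Ω) (hD : DiniCond s β Ω) :
    ∃ C > 0, ∀ (x₀ : En n) (r : ℝ), 0 < r → ∀ j : ℕ, 2 ≤ j →
      ∀ x ∈ ball x₀ r, ∀ y ∈ ball x₀ r,
        (eLpNorm
            (fun z : En n =>
              Ω (x - z) * ‖x - z‖ ^ (α - (n : ℝ)) - Ω (y - z) * ‖y - z‖ ^ (α - (n : ℝ))) s
            (volume.restrict
              (ball x₀ ((2 : ℝ) ^ (j + 1) * r) \ ball x₀ ((2 : ℝ) ^ j * r)))).toReal
        ≤ C * ((2 : ℝ) ^ j * r) ^ ((n : ℝ) * (s⁻¹).toReal - ((n : ℝ) - α)) *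
            (1 / (2 : ℝ) ^ (j - 1) +
              (1 / (2 : ℝ) ^ ((j : ℝ) * β)) *
                (∫ δ in (‖x - x₀‖ / ((2 : ℝ) ^ (j + 1) * r))..(‖x - x₀‖ / ((2 : ℝ) ^ j * r)),
                  modCont s Ω δ / δ ^ (1 + β)) +
              (1 / (2 : ℝ) ^ ((j : ℝ) * β)) *
                (∫ δ in (‖y - x₀‖ / ((2 : ℝ) ^ (j + 1) * r))..(‖y - x₀‖ / ((2 : ℝ) ^ j * r)),
                  modCont s Ω δ / δ ^ (1 + β))) := by
  have : NeZero n := ⟨by lia⟩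
  exact kernel_difference_dyadic_two_points_general α hs1.le hβ0.le hΩm hD
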